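/- arXiv:2210.07550 — 7 statements merged into one kernel-verified Lean document; each statement's English description precedes it below -/
import Mathlib

section
/- Let q be a prime power and let w_0, w_1, …, w_n be positive integers with w_0 dividing q−1. For 0 ≤ i ≤ n set d_i = (q−1)/gcd(q−1, w_i) and w̃_i = w_i/gcd(q−1, w_i), and for 1 ≤ i ≤ n set F_i = x_i^{d_i} − x_0^{d_0·w̃_i} in 𝔽_q[x_0,…,x_n]. Then a polynomial F ∈ 𝔽_q[x_0,…,x_n] that is weighted homogeneous (with respect to the weights w_0,…,w_n) vanishes at every point (t_0^{w_0}, t_1^{w_1}, …, t_n^{w_n}) with t_0,…,t_n ∈ 𝔽_q^× if and only if F lies in the ideal of 𝔽_q[x_0,…,x_n] generated by F_1, …, F_n. -/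
open MvPolynomial

/-!
Since `d i * w i = d 0 * wt i * w 0`, the binomials `X i ^ d i - X 0 ^ (d 0 * wt i)` are weighted
homogeneous, so modulo them every weighted homogeneous polynomial is congruent to one of the same
weighted degree whose degree in each `X i`, `i ≠ 0`, is less than `d i`. Setting `X 0 = 1` loses no
information on a weighted homogeneous polynomial, and as `t` runs through the roots of unity of
order dividing `N = q - 1`, the power `t ^ w i` runs through all `d i` solutions of `s ^ d i = 1`.
The reduced polynomial therefore vanishes on a grid too large for its degrees, hence is zero.
-/

section Reduction

variable {σ R M : Type*} [CommRing R] [AddCommMonoid M] {w : σ → M} {d e : σ → ℕ} {o : σ}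

variable (R) in
/-- The ideal of relations expressing a power of each variable as a power of the distinguished
variable `o`. For `σ = Fin (n + 1)`, `o = 0` and `e i = d 0 * w̃ᵢ` it is the ideal generated by
`F₁, …, Fₙ`. -/
noncomputable def binomialIdeal (o : σ) (d e : σ → ℕ) : Ideal (MvPolynomial σ R) :=
  Ideal.span {p | ∃ i ≠ o, X i ^ d i - X o ^ e i = p}

lemma binomialIdeal_zero_eq_span_range {n : ℕ} (d e : Fin (n + 1) → ℕ) :
    binomialIdeal R 0 d e =
      Ideal.span (Set.range fun i : Fin n => X i.succ ^ d i.succ - X 0 ^ e i.succ) := by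
  rw [binomialIdeal]
  congr 1
  ext p
  simp only [Set.mem_ofPred_eq, Set.mem_range, Fin.exists_fin_succ, ne_eq, not_true_eq_false,
    false_and, Fin.succ_ne_zero, not_false_eq_true, true_and, false_or]

lemma eval_eq_zero_of_mem_binomialIdeal {P : MvPolynomial σ R} (hP : P ∈ binomialIdeal R o d e)
    {x : σ → R} (hx : ∀ i ≠ o, x i ^ d i = x o ^ e i) : eval x P = 0 := by
  refine (Ideal.span_le (I := RingHom.ker (eval x))).mpr ?_ hP
  rintro _ ⟨i, hi, rfl⟩
  simp [hx i hi]

variable (R) in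
lemma exists_monomial_sub_monomial_mem_binomialIdeal
    (hd : ∀ i ≠ o, 0 < d i) (hw : ∀ i ≠ o, d i • w i = e i • w o) (m : σ →₀ ℕ) :
    ∃ m' : σ →₀ ℕ, Finsupp.weight w m' = Finsupp.weight w m ∧ (∀ i ≠ o, m' i < d i) ∧
      monomial m (1 : R) - monomial m' 1 ∈ binomialIdeal R o d e := by
  classical
  induction hk : (m.erase o).degree using Nat.strong_induction_on generalizing m with
  | _ k ih =>
  by_cases hm : ∀ i ≠ o, m i < d i
  · exact ⟨m, rfl, hm, by simp⟩
  push Not at hm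
  obtain ⟨i, hio, hi⟩ := hm
  obtain ⟨l, rfl⟩ : ∃ l, m = l + Finsupp.single i (d i) :=
    ⟨m - Finsupp.single i (d i), (tsub_add_cancel_of_le (Finsupp.single_le_iff.mpr hi)).symm⟩
  have hlt : ((l + Finsupp.single o (e i)).erase o).degree < k := by
    have := hd i hio
    simpa [← hk, Finsupp.erase_add, Finsupp.erase_single_ne hio.symm] using this
  obtain ⟨m', hweight, hm', hmem⟩ := ih _ hlt _ rfl
  refine ⟨m', ?_, hm', ?_⟩
  · rw [hweight, map_add, map_add, Finsupp.weight_single, Finsupp.weight_single, hw i hio]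
  · have hstep : monomial (l + Finsupp.single i (d i)) (1 : R) -
        monomial (l + Finsupp.single o (e i)) 1 ∈ binomialIdeal R o d e := by
      rw [monomial_add_single, monomial_add_single, ← mul_sub]
      exact Ideal.mul_mem_left _ _ (Ideal.subset_span ⟨i, hio, rfl⟩)
    simpa only [sub_add_sub_cancel] using Ideal.add_mem _ hstep hmem

lemma exists_isWeightedHomogeneous_sub_mem_binomialIdeal
    (hd : ∀ i ≠ o, 0 < d i) (hw : ∀ i ≠ o, d i • w i = e i • w o)
    {P : MvPolynomial σ R} {α : M} (hP : IsWeightedHomogeneous w P α) :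
    ∃ Q : MvPolynomial σ R, IsWeightedHomogeneous w Q α ∧ (∀ i ≠ o, Q.degreeOf i < d i) ∧
      P - Q ∈ binomialIdeal R o d e := by
  choose r hweight hlt hmem using exists_monomial_sub_monomial_mem_binomialIdeal R hd hw
  refine ⟨∑ m ∈ P.support, monomial (r m) (coeff m P), ?_, fun i hi => ?_, ?_⟩
  · refine (weightedHomogeneousSubmodule R w α).sum_mem fun m hm => ?_
    exact isWeightedHomogeneous_monomial _ _ _ ((hweight m).trans (hP (mem_support_iff.mp hm)))
  · refine (degreeOf_sum_le i _ _).trans_lt ((Finset.sup_lt_iff (hd i hi)).mpr fun m hm => ?_)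
    rw [degreeOf_monomial_eq _ _ (mem_support_iff.mp hm)]
    exact hlt m i hi
  · nth_rw 1 [P.as_sum]
    rw [← Finset.sum_sub_distrib]
    refine Ideal.sum_mem _ fun m _ => ?_
    simpa only [mul_sub, C_mul_monomial, mul_one] using
      Ideal.mul_mem_left _ (C (coeff m P)) (hmem m)

end Reduction

section Dehomogenization

variable {σ R : Type*} [DecidableEq σ] [CommSemiring R]

/-- Dehomogenization with respect to the variable `o`: the substitution `X o = 1`. The result is
kept in the same polynomial ring, where it no longer involves `X o`. -/
noncomputable def dehomogenize (o : σ) : MvPolynomial σ R →ₐ[R] MvPolynomial σ R :=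
  aeval (Function.update X o 1)

lemma dehomogenize_monomial (o : σ) (m : σ →₀ ℕ) (r : R) :
    dehomogenize o (monomial m r) = monomial (m.erase o) r := by
  rw [dehomogenize, aeval_monomial, monomial_eq, algebraMap_eq,
    ← Finsupp.mul_prod_erase' m o _ fun _ => pow_zero _]
  simp only [Function.update_self, one_pow, one_mul]
  congr 1
  refine Finsupp.prod_congr fun i hi => ?_
  rw [Function.update_of_ne (by simp_all)]

lemma dehomogenize_eq_sum (o : σ) (P : MvPolynomial σ R) :
    dehomogenize o P = ∑ m ∈ P.support, monomial (m.erase o) (coeff m P) := by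
  nth_rw 1 [P.as_sum]
  simp only [map_sum, dehomogenize_monomial]

lemma eval_dehomogenize (o : σ) (x : σ → R) (P : MvPolynomial σ R) :
    eval x (dehomogenize o P) = eval (Function.update x o 1) P := by
  induction P using MvPolynomial.induction_on with
  | C a => simp [dehomogenize]
  | add p q hp hq => simp only [map_add, hp, hq]
  | mul_X p i hp =>
    rw [map_mul, map_mul, hp, map_mul, dehomogenize, aeval_X, eval_X]
    rcases eq_or_ne i o with rfl | hi
    · simp
    · simp [hi]

lemma degreeOf_dehomogenize_le_sup (o i : σ) (P : MvPolynomial σ R) :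
    (dehomogenize o P).degreeOf i ≤ P.support.sup fun m => m.erase o i := by
  rw [dehomogenize_eq_sum]
  refine (degreeOf_sum_le i _ _).trans (Finset.sup_mono_fun fun m hm => ?_)
  rw [degreeOf_monomial_eq _ _ (mem_support_iff.mp hm)]

lemma degreeOf_dehomogenize_self (o : σ) (P : MvPolynomial σ R) :
    (dehomogenize o P).degreeOf o = 0 :=
  Nat.eq_zero_of_le_zero <| (degreeOf_dehomogenize_le_sup o o P).trans <|
    Finset.sup_le fun _ _ => Finsupp.erase_same.le

lemma degreeOf_dehomogenize_le_of_ne {o i : σ} (hi : i ≠ o) (P : MvPolynomial σ R) :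
    (dehomogenize o P).degreeOf i ≤ P.degreeOf i := by
  simpa only [degreeOf_eq_sup, Finsupp.erase_ne hi] using degreeOf_dehomogenize_le_sup o i P

end Dehomogenization

section WeightedHomogeneous

variable {σ R M : Type*} [AddCancelCommMonoid M] {w : σ → M} {o : σ} {α : M}

lemma eq_of_erase_eq_of_weight_eq (ho : ¬IsOfFinAddOrder (w o)) {m m' : σ →₀ ℕ}
    (herase : m.erase o = m'.erase o) (hweight : Finsupp.weight w m = Finsupp.weight w m') :
    m = m' := by
  have hmo : m o = m' o := by
    rw [← Finsupp.erase_add_single o m, ← Finsupp.erase_add_single o m', herase, map_add, map_add,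
      Finsupp.weight_single, Finsupp.weight_single] at hweight
    exact injective_nsmul_iff_not_isOfFinAddOrder.mpr ho (add_left_cancel hweight)
  rw [← Finsupp.erase_add_single o m, ← Finsupp.erase_add_single o m', herase, hmo]

lemma eq_zero_of_dehomogenize_eq_zero [DecidableEq σ] [CommSemiring R] {P : MvPolynomial σ R}
    (ho : ¬IsOfFinAddOrder (w o)) (hP : IsWeightedHomogeneous w P α) (h : dehomogenize o P = 0) :
    P = 0 := by
  ext m
  by_contra hm
  have hcoeff : coeff (m.erase o) (dehomogenize o P) = coeff m P := by
    rw [dehomogenize_eq_sum, coeff_sum, Finset.sum_eq_single m]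
    · rw [coeff_monomial, if_pos rfl]
    · intro l hl hlm
      have hweight := (hP (mem_support_iff.mp hl)).trans (hP hm).symm
      rw [coeff_monomial, if_neg fun herase => hlm (eq_of_erase_eq_of_weight_eq ho herase hweight)]
    · exact fun hm' => absurd (mem_support_iff.mpr hm) hm'
  exact hm (by rw [← hcoeff, h, coeff_zero, coeff_zero])

variable [Finite σ] [CommRing R] [IsDomain R] {P : MvPolynomial σ R}

lemma eq_zero_of_isWeightedHomogeneous_of_eval_zero_at_prod_finset
    (ho : ¬IsOfFinAddOrder (w o)) (hP : IsWeightedHomogeneous w P α) (S : σ → Finset R)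
    (hdeg : ∀ i ≠ o, P.degreeOf i < (S i).card)
    (heval : ∀ x : σ → R, x o = 1 → (∀ i ≠ o, x i ∈ S i) → eval x P = 0) : P = 0 := by
  classical
  refine eq_zero_of_dehomogenize_eq_zero ho hP
    (eq_zero_of_eval_zero_at_prod_finset _ (Function.update S o {1}) (fun i => ?_) fun x hx => ?_)
  · rcases eq_or_ne i o with rfl | hi
    · simp [degreeOf_dehomogenize_self]
    · simpa only [Function.update_of_ne hi] using
        (degreeOf_dehomogenize_le_of_ne hi P).trans_lt (hdeg i hi)
  · rw [eval_dehomogenize]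
    refine heval _ (Function.update_self ..) fun i hi => ?_
    simpa only [Function.update_of_ne hi] using hx i

lemma mem_binomialIdeal_of_eval_eq_zero {d e : σ → ℕ} {ζ : σ → R} (hd : ∀ i ≠ o, 0 < d i)
    (hζ : ∀ i ≠ o, IsPrimitiveRoot (ζ i) (d i)) (hw : ∀ i ≠ o, d i • w i = e i • w o)
    (ho : ¬IsOfFinAddOrder (w o)) (hP : IsWeightedHomogeneous w P α)
    (heval : ∀ x : σ → R, x o = 1 → (∀ i ≠ o, x i ^ d i = 1) → eval x P = 0) :
    P ∈ binomialIdeal R o d e := by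
  obtain ⟨Q, hQ, hdeg, hPQ⟩ := exists_isWeightedHomogeneous_sub_mem_binomialIdeal hd hw hP
  suffices hQ0 : Q = 0 by simpa [hQ0] using hPQ
  refine eq_zero_of_isWeightedHomogeneous_of_eval_zero_at_prod_finset ho hQ
    (fun i => Polynomial.nthRootsFinset (d i) 1) (fun i hi => ?_) fun x hxo hx => ?_
  · rw [(hζ i hi).card_nthRootsFinset]
    exact hdeg i hi
  · have hroot (i) (hi : i ≠ o) : x i ^ d i = 1 :=
      (Polynomial.mem_nthRootsFinset (hd i hi) 1).mp (hx i hi)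
    have hsub : eval x (P - Q) = 0 :=
      eval_eq_zero_of_mem_binomialIdeal hPQ fun i hi => by rw [hroot i hi, hxo, one_pow]
    simpa only [map_sub, heval x hxo hroot, zero_sub, neg_eq_zero] using hsub

end WeightedHomogeneous

lemma div_gcd_mul_eq_mul_div_gcd (a b : ℕ) : a / a.gcd b * b = a * (b / a.gcd b) := by
  rw [Nat.div_mul_right_comm (a.gcd_dvd_left b), Nat.mul_div_assoc _ (a.gcd_dvd_right b)]

section RootsOfUnity

lemma isPrimitiveRoot_pow_div_gcd {M : Type*} [CommMonoid M] {ζ : M} {N : ℕ} (hN : 0 < N)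
    (hζ : IsPrimitiveRoot ζ N) (k : ℕ) : IsPrimitiveRoot (ζ ^ k) (N / N.gcd k) := by
  have hfin : IsOfFinOrder ζ := isOfFinOrder_iff_pow_eq_one.mpr ⟨N, hN, hζ.pow_eq_one⟩
  rw [IsPrimitiveRoot.iff_orderOf, hfin.orderOf_pow, ← hζ.eq_orderOf]

lemma pow_div_gcd_eq_one_iff {R : Type*} [CommRing R] [IsDomain R] {ζ s : R} {N k : ℕ}
    (hN : 0 < N) (hζ : IsPrimitiveRoot ζ N) :
    s ^ (N / N.gcd k) = 1 ↔ ∃ t : Rˣ, t ^ N = 1 ∧ (t : R) ^ k = s := by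
  constructor
  · intro hs
    have : NeZero (N / N.gcd k) := ⟨(Nat.div_gcd_pos_of_pos_left k hN).ne'⟩
    obtain ⟨j, -, rfl⟩ := (isPrimitiveRoot_pow_div_gcd hN hζ k).eq_pow_of_pow_eq_one hs
    lift ζ to Rˣ using hζ.isUnit hN.ne'
    refine ⟨ζ ^ j, ?_, ?_⟩
    · rw [pow_right_comm, (IsPrimitiveRoot.coe_units_iff.mp hζ).pow_eq_one, one_pow]
    · rw [Units.val_pow_eq_pow_val, pow_right_comm]
  · rintro ⟨t, ht, rfl⟩
    rw [← pow_mul', div_gcd_mul_eq_mul_div_gcd, pow_mul, ← Units.val_pow_eq_pow_val, ht,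
      Units.val_one, one_pow]

lemma exists_isPrimitiveRoot_card_sub_one (F : Type*) [Field F] [Fintype F] :
    ∃ ζ : F, IsPrimitiveRoot ζ (Fintype.card F - 1) := by
  obtain ⟨ζ, hζ⟩ := IsCyclic.exists_ofOrder_eq_natCard (α := Fˣ)
  refine ⟨ζ, IsPrimitiveRoot.coe_units_iff.mpr (IsPrimitiveRoot.iff_orderOf.mpr ?_)⟩
  rw [hζ, Nat.card_units, Nat.card_eq_fintype_card]

end RootsOfUnity

theorem stmt0_general {R : Type*} [CommRing R] [IsDomain R] {N : ℕ} (hN : 0 < N) {ζ : R}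
    (hζ : IsPrimitiveRoot ζ N) (n : ℕ) (w : Fin (n + 1) → ℕ) (hw0 : w 0 ∣ N)
    (d wt : Fin (n + 1) → ℕ) (hd : ∀ i, d i = N / N.gcd (w i))
    (hwt : ∀ i, wt i = w i / N.gcd (w i))
    (P : MvPolynomial (Fin (n + 1)) R) (α : ℕ) (hP : IsWeightedHomogeneous w P α) :
    (∀ t : Fin (n + 1) → Rˣ, (∀ i, t i ^ N = 1) → eval (fun i => (t i : R) ^ w i) P = 0) ↔
      P ∈ Ideal.span (Set.range fun i : Fin n =>
        (X i.succ ^ d i.succ - X 0 ^ (d 0 * wt i.succ) : MvPolynomial (Fin (n + 1)) R)) := by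
  obtain rfl : d = fun i => N / N.gcd (w i) := funext hd
  obtain rfl : wt = fun i => w i / N.gcd (w i) := funext hwt
  rw [← binomialIdeal_zero_eq_span_range (fun i => N / N.gcd (w i))
    fun i => N / N.gcd (w 0) * (w i / N.gcd (w i))]
  constructor
  · intro hvanish
    refine mem_binomialIdeal_of_eval_eq_zero (fun i _ => Nat.div_gcd_pos_of_pos_left _ hN)
      (fun i _ => isPrimitiveRoot_pow_div_gcd hN hζ (w i)) (fun i _ => ?_) ?_ hP fun x hx0 hx => ?_
    · rw [smul_eq_mul, smul_eq_mul, div_gcd_mul_eq_mul_div_gcd, mul_right_comm,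
        Nat.gcd_eq_right hw0, Nat.div_mul_cancel hw0]
    · exact not_isOfFinAddOrder_of_isAddTorsionFree (Nat.pos_of_dvd_of_pos hw0 hN).ne'
    · have hx' (i) : x i ^ (N / N.gcd (w i)) = 1 := by
        rcases eq_or_ne i 0 with rfl | hi
        · rw [hx0, one_pow]
        · exact hx i hi
      choose t htN htx using fun i => (pow_div_gcd_eq_one_iff hN hζ).mp (hx' i)
      simpa only [htx] using hvanish t htN
  · intro hmem t ht
    refine eval_eq_zero_of_mem_binomialIdeal hmem fun i _ => ?_
    have hroot (j) : ((t j : R) ^ w j) ^ (N / N.gcd (w j)) = 1 :=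
      (pow_div_gcd_eq_one_iff hN hζ).mpr ⟨t j, ht j, rfl⟩
    rw [hroot, pow_mul, hroot, one_pow]

/-- Let `q` be a prime power (realized as the cardinality of a finite
field `𝔽`) and `w 0, …, w n` positive integers with `w 0 ∣ q - 1`.  With
`d i = (q-1)/gcd(q-1, w i)`, `w̃ i = w i / gcd(q-1, w i)` and
`Fᵢ = xᵢ^{dᵢ} - x₀^{d₀·w̃ᵢ}` for `1 ≤ i ≤ n`, a weighted homogeneous polynomial
vanishes at every point `(t₀^{w₀}, …, tₙ^{wₙ})` with `tᵢ ∈ 𝔽ˣ` iff it lies in the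
ideal generated by `F₁, …, Fₙ`. -/
theorem stmt0 (n : ℕ) (F : Type) [Field F] [Fintype F] (q : ℕ) (hq : Fintype.card F = q)
    (w : Fin (n + 1) → ℕ) (hw : ∀ i, 0 < w i) (hw0 : w 0 ∣ q - 1)
    (d wt : Fin (n + 1) → ℕ)
    (hd : ∀ i, d i = (q - 1) / Nat.gcd (q - 1) (w i))
    (hwt : ∀ i, wt i = w i / Nat.gcd (q - 1) (w i))
    (P : MvPolynomial (Fin (n + 1)) F) (α : ℕ)
    (hP : IsWeightedHomogeneous w P α) :
    (∀ t : Fin (n + 1) → Fˣ, eval (fun i => (t i : F) ^ w i) P = 0) ↔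
      P ∈ Ideal.span (Set.range fun i : Fin n =>
        (X i.succ ^ d i.succ - X 0 ^ (d 0 * wt i.succ) : MvPolynomial (Fin (n + 1)) F)) := by
  subst hq
  obtain ⟨ζ, hζ⟩ := exists_isPrimitiveRoot_card_sub_one F
  simpa [← Nat.card_eq_fintype_card, ← Nat.card_units] using
    stmt0_general (Nat.sub_pos_of_lt Fintype.one_lt_card) hζ n w hw0 d wt hd hwt P α hP
end

section
/- Let q be a prime power and let w_0, w_1, …, w_n be positive integers with w_0 dividing q−1. For 0 ≤ i ≤ n set d_i = (q−1)/gcd(q−1, w_i), and let A = {(t_0^{w_0}, t_1^{w_1}, …, t_n^{w_n}) : t_0,…,t_n ∈ 𝔽_q^×} ⊆ 𝔽_q^{n+1}. For γ ∈ ℤ let D(γ) = #{(m_0,…,m_n) ∈ ℕ^{n+1} : m_0 w_0 + ⋯ + m_n w_n = γ} (so D(γ) = 0 for γ < 0). Then for every α ∈ ℕ, the rank over 𝔽_q of the evaluation map ev_A : S_α → (A → 𝔽_q) equals Σ_{s=0}^{n} (−1)^s Σ_{I ⊆ {1,…,n}, |I| = s} D(α − Σ_{i∈I} d_i w_i). 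-/
/-!
On a product of finite subgroups `G i ≤ Fˣ` of orders `d i` the monomials restrict to characters
of the group `∏ i, G i`, and distinct characters are linearly independent. So the rank of the
evaluation map is the number of distinct characters given by exponent vectors `v` of weight `α`,
where only the residues of `v i` modulo `d i` matter. If `d 0 * w 0` divides every `d i * w i`, then
reducing the coordinates `i ≠ 0` modulo `d i` can be compensated in coordinate `0` without changing
the weight or the character, so each character comes from exactly one `v` with `v i < d i` for all
`i ≠ 0`. Inclusion–exclusion over the conditions `d i ≤ v i` counts these vectors. In the case at
hand `G i` is the group of `w i`-th powers and `d i * w i = lcm (q - 1) (w i)`.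
-/

open MvPolynomial

/-- Evaluation of multivariate polynomials at the points of a set `Y`, as a linear map. -/
noncomputable def evalOn {n : ℕ} (F : Type) [CommSemiring F] (Y : Set (Fin n → F)) :
    MvPolynomial (Fin n) F →ₗ[F] (Y → F) where
  toFun P := fun y => eval y.val P
  map_add' := by intro P Q; funext y; simp
  map_smul' := by intro c P; funext y; simp [MvPolynomial.smul_eval]

/-- The evaluation code: image of the space of weighted homogeneous polynomials of
degree `α` under evaluation at the points of `Y`. -/
noncomputable def code {n : ℕ} (F : Type) [Field F] (w : Fin n → ℕ) (α : ℕ)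
    (Y : Set (Fin n → F)) : Submodule F (Y → F) :=
  Submodule.map (evalOn F Y) (weightedHomogeneousSubmodule F w α)

/-- `D w γ` is the number of monomial exponent vectors of weighted degree `γ ∈ ℤ`
(it is `0` for `γ < 0`). -/
noncomputable def numMonomials {m : ℕ} (w : Fin m → ℕ) (γ : ℤ) : ℕ :=
  Nat.card {v : Fin m → ℕ // (∑ i, (v i : ℤ) * (w i : ℤ)) = γ}

open Finsupp (weight)

theorem ncard_sdiff_iUnion_eq_sum {X κ : Type*} [Fintype κ] {s : Set X} (hs : s.Finite)
    (P : κ → Set X) :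
    ((s \ ⋃ k, P k).ncard : ℤ) =
      ∑ I : Finset κ, (-1 : ℤ) ^ I.card * ((s ∩ ⋂ k ∈ I, P k).ncard : ℤ) := by
  classical
  have := hs.fintype
  let S (k : κ) : Finset s := {x | x.1 ∈ P k}
  have ncard_eq (t : Set X) (T : Finset s) (h : ∀ x, x ∈ T ↔ x.1 ∈ t) :
      (s ∩ t).ncard = T.card := by
    rw [← Subtype.image_preimage_coe, Set.ncard_image_of_injective _ Subtype.val_injective,
      ← Set.ncard_coe_finset]
    congr 1
    ext x
    simp [h]
  rw [Set.sdiff_eq, ncard_eq _ (Finset.univ.inf fun k ↦ (S k)ᶜ) fun x ↦ by simp [S, Finset.mem_inf],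
    Finset.inclusion_exclusion_card_inf_compl, Finset.powerset_univ]
  refine Finset.sum_congr rfl fun I _ ↦ ?_
  rw [ncard_eq _ (I.inf S) fun x ↦ by simp [S, Finset.mem_inf]]

theorem numMonomials_sub_weight {m : ℕ} (w : Fin m → ℕ) (α : ℕ) (e : Fin m →₀ ℕ) :
    numMonomials w ((α : ℤ) - (weight w e : ℕ)) = ({v | weight w v = α} ∩ Set.Ici e).ncard := by
  have weight_cast (v : Fin m →₀ ℕ) : ((weight w v : ℕ) : ℤ) = ∑ i, (v i : ℤ) * (w i : ℤ) := by
    simp [Finsupp.weight_eq_sum]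
  have image_add :
      {v | weight w v = α} ∩ Set.Ici e =
        (· + e) '' {v | ((weight w v : ℕ) : ℤ) = (α : ℤ) - (weight w e : ℕ)} := by
    ext v
    constructor
    · rintro ⟨rfl, hev : e ≤ v⟩
      obtain ⟨u, rfl⟩ := exists_add_of_le hev
      exact ⟨u, by simp, add_comm u e⟩
    · rintro ⟨u, hu : ((weight w u : ℕ) : ℤ) = _, rfl⟩
      exact ⟨by simpa using by lia, le_add_self (a := e)⟩
  rw [image_add, Set.ncard_image_of_injective _ (add_left_injective e), numMonomials,
    ← Nat.card_coe_set_eq]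
  refine Nat.card_congr (Finsupp.equivFunOnFinite.symm.subtypeEquiv fun v ↦ ?_)
  simp [weight_cast]

section ReducedExponents

variable {ι : Type*} {w d : ι → ℕ} {i₀ : ι} {α : ℕ}

/-- The exponent vectors of weighted degree `α` that are reduced modulo `d` in every coordinate
other than `i₀`: the normal forms of exponent vectors modulo `d`. -/
def reducedExponents (w d : ι → ℕ) (i₀ : ι) (α : ℕ) : Set (ι →₀ ℕ) :=
  {v | weight w v = α ∧ ∀ i ≠ i₀, v i < d i}

theorem reducedExponents_eq_of_modEq (hw : w i₀ ≠ 0) {u v : ι →₀ ℕ}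
    (hu : u ∈ reducedExponents w d i₀ α) (hv : v ∈ reducedExponents w d i₀ α)
    (huv : ∀ i, u i ≡ v i [MOD d i]) : u = v := by
  have erase_eq : u.erase i₀ = v.erase i₀ := by
    ext i
    obtain rfl | hi := eq_or_ne i i₀
    · simp
    · simpa [hi] using (huv i).eq_of_lt_of_lt (hu.2 i hi) (hv.2 i hi)
  have weight_eq : u i₀ * w i₀ + weight w (u.erase i₀) = v i₀ * w i₀ + weight w (v.erase i₀) := by
    simpa only [← smul_eq_mul, ← Finsupp.weight_single, ← map_add, Finsupp.single_add_erase]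
      using hu.1.trans hv.1.symm
  have eq_at : u i₀ = v i₀ :=
    Nat.eq_of_mul_eq_mul_right (Nat.pos_of_ne_zero hw)
      (by rwa [erase_eq, add_left_inj] at weight_eq)
  rw [← Finsupp.single_add_erase i₀ u, ← Finsupp.single_add_erase i₀ v, eq_at, erase_eq]

theorem exists_mem_reducedExponents_modEq [Finite ι] (hd : ∀ i, 0 < d i)
    (hdvd : ∀ i, d i₀ * w i₀ ∣ d i * w i) (v : ι →₀ ℕ) :
    ∃ u ∈ reducedExponents w d i₀ (weight w v), ∀ i, u i ≡ v i [MOD d i] := by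
  classical
  cases nonempty_fintype ι
  let r : ι →₀ ℕ := Finsupp.equivFunOnFinite.symm fun i ↦ if i = i₀ then v i else v i % d i
  let c : ι →₀ ℕ := Finsupp.equivFunOnFinite.symm fun i ↦ if i = i₀ then 0 else d i * (v i / d i)
  have hrc : r + c = v := by
    ext i
    by_cases hi : i = i₀ <;> simp [r, c, hi, Nat.mod_add_div]
  obtain ⟨k, hk⟩ : d i₀ * w i₀ ∣ weight w c := by
    rw [Finsupp.weight_eq_sum]
    refine Finset.dvd_sum fun i _ ↦ (hdvd i).trans ?_
    by_cases hi : i = i₀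
    · simp [c, hi]
    · exact ⟨v i / d i, by simp [c, hi, mul_right_comm]⟩
  refine ⟨r + Finsupp.single i₀ (d i₀ * k), ⟨?_, fun i hi ↦ ?_⟩, fun i ↦ ?_⟩
  · rw [← hrc, map_add, map_add, Finsupp.weight_single, hk, smul_eq_mul]
    ring
  · simpa [r, hi, Ne.symm hi] using Nat.mod_lt _ (hd i)
  · obtain rfl | hi := eq_or_ne i i₀
    · simp [r, Nat.ModEq]
    · simp [r, hi, Nat.ModEq]

end ReducedExponents

theorem ncard_reducedExponents {n : ℕ} {w d : Fin (n + 1) → ℕ} (hw : ∀ i, 0 < w i) (α : ℕ) :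
    ((reducedExponents w d 0 α).ncard : ℤ) =
      ∑ I : Finset (Fin n), (-1 : ℤ) ^ I.card *
        (numMonomials w ((α : ℤ) - ∑ i ∈ I, (d i.succ : ℤ) * (w i.succ : ℤ)) : ℤ) := by
  have eq_sdiff : reducedExponents w d 0 α =
      {v | weight w v = α} \ ⋃ i : Fin n, {v | d i.succ ≤ v i.succ} := by
    ext v
    simp [reducedExponents, Fin.forall_fin_succ]
  rw [eq_sdiff, ncard_sdiff_iUnion_eq_sum
    (Finsupp.finite_of_nat_weight_eq w (fun i ↦ (hw i).ne') α)]
  refine Finset.sum_congr rfl fun I _ ↦ ?_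
  let e : Fin (n + 1) →₀ ℕ := ∑ i ∈ I, Finsupp.single i.succ (d i.succ)
  have e_zero : e 0 = 0 := by simp [e, Finsupp.finsetSum_apply]
  have e_succ (i : Fin n) : e i.succ = if i ∈ I then d i.succ else 0 := by
    simp [e, Finsupp.finsetSum_apply, Finsupp.single_apply]
  have iInter_eq : ⋂ i ∈ I, {v : Fin (n + 1) →₀ ℕ | d i.succ ≤ v i.succ} = Set.Ici e := by
    ext v
    simp only [Set.mem_iInter, Set.mem_ofPred, Set.mem_Ici, Finsupp.le_def, Fin.forall_fin_succ,
      e_zero, e_succ, zero_le, true_and]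
    exact forall_congr' fun i ↦ by split_ifs with hi <;> simp [hi]
  have weight_e : ((weight w e : ℕ) : ℤ) = ∑ i ∈ I, (d i.succ : ℤ) * (w i.succ : ℤ) := by
    simp [e, Finsupp.weight_single]
  rw [iInter_eq, ← numMonomials_sub_weight, weight_e]

theorem finrank_span_monoidHom_image {M R : Type*} [MulOneClass M] [CommRing R] [IsDomain R]
    (s : Set (M →* R)) :
    Module.finrank R (Submodule.span R ((fun χ : M →* R ↦ (χ : M → R)) '' s)) = s.ncard := by
  have hrank := toENat_rank_span_set ((linearIndependent_monoidHom M R).linearIndepOn s)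
  exact congrArg ENat.toNat hrank

section Torus

variable {ι R : Type*} [CommRing R]

/-- The product of the subgroups `G i` of `Rˣ`, as a set of points of affine space
(a degenerate torus). -/
def torus (G : ι → Subgroup Rˣ) : Set (ι → R) :=
  Set.range fun (t : ∀ i, G i) (i : ι) ↦ ((t i : Rˣ) : R)

variable [Fintype ι] {G : ι → Subgroup Rˣ}

/-- The character of the group `∏ i, G i` with values in `R` given by the monomial with exponent
vector `v`. -/
def monomialChar (G : ι → Subgroup Rˣ) (v : ι →₀ ℕ) : (∀ i, G i) →* R where
  toFun t := ∏ i, ((t i : Rˣ) : R) ^ v i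
  map_one' := by simp
  map_mul' s t := by simp [mul_pow, Finset.prod_mul_distrib]

theorem monomialChar_mulSingle [DecidableEq ι] (v : ι →₀ ℕ) (i : ι) (g : G i) :
    monomialChar G v (Pi.mulSingle i g) = (((g ^ v i : G i) : Rˣ) : R) := by
  change ∏ j, (((Pi.mulSingle i g : ∀ j, G j) j : Rˣ) : R) ^ v j = _
  rw [Finset.prod_eq_single i (fun j _ hj ↦ by simp [Pi.mulSingle_eq_of_ne hj]) (by simp)]
  simp

variable [IsDomain R] [∀ i, Finite (G i)]

theorem monomialChar_eq_iff {u v : ι →₀ ℕ} :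
    monomialChar G u = monomialChar G v ↔ ∀ i, u i ≡ v i [MOD Nat.card (G i)] := by
  classical
  refine ⟨fun h i ↦ ?_, fun h ↦ DFunLike.ext _ _ fun t ↦ Finset.prod_congr rfl fun i _ ↦ ?_⟩
  · obtain ⟨g, hg⟩ := IsCyclic.exists_generator (α := G i)
    have hpow := DFunLike.congr_fun h (Pi.mulSingle i g)
    rwa [monomialChar_mulSingle, monomialChar_mulSingle, Units.val_inj, Subtype.val_inj,
      pow_eq_pow_iff_modEq, orderOf_eq_card_of_forall_mem_zpowers hg] at hpow
  · have hpow : t i ^ u i = t i ^ v i :=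
      pow_eq_pow_iff_modEq.mpr ((h i).of_dvd (orderOf_dvd_natCard _))
    exact_mod_cast congrArg (fun g : G i ↦ ((g : Rˣ) : R)) hpow

variable {w : ι → ℕ} {i₀ : ι}

theorem image_monomialChar_reducedExponents
    (hdvd : ∀ i, Nat.card (G i₀) * w i₀ ∣ Nat.card (G i) * w i) (α : ℕ) :
    monomialChar G '' reducedExponents w (fun i ↦ Nat.card (G i)) i₀ α =
      monomialChar G '' {v | weight w v = α} := by
  refine (Set.image_mono fun v hv ↦ hv.1).antisymm ?_
  rintro _ ⟨v, rfl, rfl⟩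
  obtain ⟨u, hu, huv⟩ := exists_mem_reducedExponents_modEq (fun _ ↦ Nat.card_pos) hdvd v
  exact ⟨u, hu, monomialChar_eq_iff.mpr huv⟩

theorem injOn_monomialChar_reducedExponents (hw : w i₀ ≠ 0) (α : ℕ) :
    Set.InjOn (monomialChar G) (reducedExponents w (fun i ↦ Nat.card (G i)) i₀ α) :=
  fun _ hu _ hv h ↦ reducedExponents_eq_of_modEq hw hu hv (monomialChar_eq_iff.mp h)

end Torus

section Code

variable {n : ℕ} {F : Type} [Field F]

theorem code_eq_span (w : Fin n → ℕ) (α : ℕ) (Y : Set (Fin n → F)) :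
    code F w α Y =
      Submodule.span F
        ((fun (v : Fin n →₀ ℕ) (y : Y) ↦ ∏ i, y.1 i ^ v i) '' {v | weight w v = α}) := by
  rw [code, weightedHomogeneousSubmodule_eq_finsupp_supported,
    AddMonoidAlgebra.supported_eq_span_single, Submodule.map_span, Set.image_image]
  refine congrArg _ (Set.image_congr fun v _ ↦ funext fun y ↦ ?_)
  change eval y.1 (monomial v 1) = _
  rw [eval_monomial, one_mul, Finsupp.prod_pow]

theorem finrank_code_torus (w : Fin n → ℕ) (α : ℕ) (G : Fin n → Subgroup Fˣ) :
    Module.finrank F (code F w α (torus G)) =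
      (monomialChar G '' {v | weight w v = α}).ncard := by
  -- `code` lives on the points of the torus, characters on the group `∏ i, G i` parametrizing them.
  let pullback : (torus G → F) →ₗ[F] ((∀ i, G i) → F) :=
    LinearMap.funLeft F F (Set.rangeFactorization fun (t : ∀ i, G i) (i : Fin n) ↦ ((t i : Fˣ) : F))
  have pullback_injective : Function.Injective pullback :=
    LinearMap.funLeft_injective_of_surjective F F _ Set.rangeFactorization_surjective
  rw [← finrank_span_monoidHom_image, code_eq_span,
    (Submodule.equivMapOfInjective pullback pullback_injective _).finrank_eq,
    Submodule.map_span, Set.image_image, Set.image_image]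
  rfl

theorem stmt2_general {n : ℕ} {w : Fin (n + 1) → ℕ} (hw : ∀ i, 0 < w i)
    {G : Fin (n + 1) → Subgroup Fˣ} [∀ i, Finite (G i)] {d : Fin (n + 1) → ℕ}
    (hd : ∀ i, d i = Nat.card (G i)) (hdvd : ∀ i, d 0 * w 0 ∣ d i * w i) (α : ℕ) :
    (Module.finrank F (code F w α (torus G)) : ℤ) =
      ∑ I : Finset (Fin n), (-1 : ℤ) ^ I.card *
        (numMonomials w ((α : ℤ) - ∑ i ∈ I, (d i.succ : ℤ) * (w i.succ : ℤ)) : ℤ) := by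
  obtain rfl : d = fun i ↦ Nat.card (G i) := funext hd
  rw [finrank_code_torus, ← image_monomialChar_reducedExponents hdvd,
    (injOn_monomialChar_reducedExponents (hw 0).ne' α).ncard_image, ncard_reducedExponents hw]

end Code

theorem setOf_pow_eq_torus {ι R : Type*} [CommRing R] (w : ι → ℕ) :
    {y | ∃ t : ι → Rˣ, y = fun i ↦ (t i : R) ^ w i} =
      torus fun i ↦ (powMonoidHom (w i) : Rˣ →* Rˣ).range := by
  ext y
  constructor
  · rintro ⟨t, rfl⟩
    exact ⟨fun i ↦ ⟨t i ^ w i, t i, rfl⟩, by simp⟩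
  · rintro ⟨g, rfl⟩
    choose t ht using fun i ↦ (g i).2
    exact ⟨t, funext fun i ↦ by simp [← ht]⟩

theorem card_range_powMonoidHom_units (F : Type*) [Field F] [Fintype F] (k : ℕ) :
    Nat.card (powMonoidHom k : Fˣ →* Fˣ).range =
      (Fintype.card F - 1) / (Fintype.card F - 1).gcd k := by
  rw [IsCyclic.card_powMonoidHom_range, Nat.card_units, Nat.card_eq_fintype_card]

theorem div_gcd_mul_dvd_div_gcd_mul {m a : ℕ} (ha : a ∣ m) (b : ℕ) :
    m / m.gcd a * a ∣ m / m.gcd b * b := by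
  rw [Nat.gcd_eq_right ha, Nat.div_mul_cancel ha, Nat.div_mul_right_comm (m.gcd_dvd_left b)]
  exact m.dvd_lcm_left b

/-- With `q` the cardinality of a finite field `𝔽`, positive weights
`w 0, …, w n` with `w 0 ∣ q - 1`, `d i = (q-1)/gcd(q-1, w i)`, and
`A = {(t₀^{w₀}, …, tₙ^{wₙ}) : tᵢ ∈ 𝔽ˣ}`, the rank of the evaluation map
`ev_A : S_α → (A → 𝔽)` equals the alternating sum
`∑_{I ⊆ {1,…,n}} (-1)^{|I|} D(α - ∑_{i ∈ I} dᵢ wᵢ)`. -/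
theorem stmt2 (n : ℕ) (F : Type) [Field F] [Fintype F] (q : ℕ) (hq : Fintype.card F = q)
    (w : Fin (n + 1) → ℕ) (hw : ∀ i, 0 < w i) (hw0 : w 0 ∣ q - 1)
    (d : Fin (n + 1) → ℕ)
    (hd : ∀ i, d i = (q - 1) / Nat.gcd (q - 1) (w i))
    (A : Set (Fin (n + 1) → F))
    (hA : A = {y | ∃ t : Fin (n + 1) → Fˣ, y = fun i => (t i : F) ^ w i})
    (α : ℕ) :
    (Module.finrank F (code F w α A) : ℤ) =
      ∑ I : Finset (Fin n), (-1 : ℤ) ^ I.card *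
        (numMonomials w ((α : ℤ) - ∑ i ∈ I, (d i.succ : ℤ) * (w i.succ : ℤ)) : ℤ) := by
  subst hq hA
  rw [setOf_pow_eq_torus]
  exact stmt2_general hw (fun i ↦ by rw [hd, card_range_powMonoidHom_units])
    (fun i ↦ by simpa only [hd] using div_gcd_mul_dvd_div_gcd_mul hw0 (w i)) α
end

section
/- Let q be a prime power and let w_1, …, w_n be positive integers; use weights (1, w_1, …, w_n) on 𝔽_q[x_0,…,x_n]. For 1 ≤ i ≤ n set d_i = (q−1)/gcd(q−1, w_i), and let Y = {(1, s_1^{w_1}, …, s_n^{w_n}) : s_1,…,s_n ∈ 𝔽_q^×} ⊆ 𝔽_q^{n+1}. Then for every α ∈ ℕ, the evaluation map ev_Y : S_α → (Y → 𝔽_q) is surjective if and only if α ≥ (d_1−1)w_1 + ⋯ + (d_n−1)w_n. (Equivalently, the a-invariant of Y is (d_1−1)w_1 + ⋯ + (d_n−1)w_n − 1.) -/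
open MvPolynomial

/-!
The set `Y` is the grid `{1} × A₁ × ⋯ × Aₙ`, where `Aᵢ` is the set of `wᵢ`-th powers of units and
has `dᵢ` elements; the criterion holds for arbitrary nonempty finite subsets `Aᵢ` of any field.

If `α` is too small, each monomial of degree `α` has an exponent `mᵢ < |Aᵢ| - 1`. The barycentric
weights of `Aᵢ` annihilate the powers `aᵐ` with `m < |Aᵢ| - 1`, so their product gives a linear
relation, with all coefficients nonzero, among the values on the grid of any form in `S_α`. Hence no
form in `S_α` vanishes at all points of the grid but one. Conversely, homogenizing a product of
Lagrange basis polynomials by powers of `x₀` gives the indicator function of any point of the grid,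
in degree `∑ (|Aᵢ| - 1) wᵢ`; multiplication by a power of `x₀` raises the degree to `α`.
-/

open Finset

section Necessity

theorem sum_nodalWeight_mul_pow_eq_zero {ι F : Type*} [DecidableEq ι] [Field F] {s : Finset ι}
    {v : ι → F} (hvs : Set.InjOn v s) {k : ℕ} (hk : k < #s - 1) :
    ∑ i ∈ s, Lagrange.nodalWeight s v i * v i ^ k = 0 := by
  have hdeg : (Polynomial.X ^ k : Polynomial F).degree < #s := by
    rw [Polynomial.degree_X_pow, Nat.cast_lt]
    lia
  have hcoeff := Lagrange.coeff_eq_sum hvs hdeg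
  rw [Polynomial.coeff_X_pow, if_neg hk.ne'] at hcoeff
  simpa only [Lagrange.nodalWeight, prod_inv_distrib, Polynomial.eval_pow, Polynomial.eval_X,
    div_eq_mul_inv, mul_comm] using hcoeff.symm

variable {σ F : Type*} [Fintype σ] [DecidableEq σ] [Field F] {B : σ → Finset F}

theorem sum_piFinset_prod_nodalWeight_mul_eval_eq_zero [DecidableEq F]
    {P : MvPolynomial σ F} (hP : ∀ m ∈ P.support, ∃ i, m i < #(B i) - 1) :
    ∑ y ∈ Fintype.piFinset B, (∏ i, Lagrange.nodalWeight (B i) id (y i)) * eval y P = 0 := by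
  simp_rw [eval_eq', mul_sum]
  rw [sum_comm]
  refine sum_eq_zero fun m hm => ?_
  obtain ⟨i, hi⟩ := hP m hm
  calc ∑ y ∈ Fintype.piFinset B,
        (∏ i, Lagrange.nodalWeight (B i) id (y i)) * (coeff m P * ∏ i, y i ^ m i)
      = coeff m P * ∑ y ∈ Fintype.piFinset B,
          ∏ i, Lagrange.nodalWeight (B i) id (y i) * y i ^ m i := by
        simp_rw [mul_sum, prod_mul_distrib, mul_left_comm]
    _ = coeff m P * ∏ i, ∑ a ∈ B i, Lagrange.nodalWeight (B i) id a * a ^ m i := by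
        rw [prod_univ_sum]
    _ = 0 := by
        rw [prod_eq_zero (mem_univ i)
          (sum_nodalWeight_mul_pow_eq_zero Function.injective_id.injOn hi), mul_zero]

theorem eval_eq_zero_of_forall_ne_eval_eq_zero {P : MvPolynomial σ F}
    (hP : ∀ m ∈ P.support, ∃ i, m i < #(B i) - 1) {y : σ → F} (hy : y ∈ Fintype.piFinset B)
    (hvanish : ∀ z ∈ Fintype.piFinset B, z ≠ y → eval z P = 0) : eval y P = 0 := by
  classical
  have hsum := sum_piFinset_prod_nodalWeight_mul_eval_eq_zero hP
  rw [sum_eq_single_of_mem y hy fun z hz hzy => by rw [hvanish z hz hzy, mul_zero]] at hsum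
  have hweight : ∏ i, Lagrange.nodalWeight (B i) id (y i) ≠ 0 :=
    prod_ne_zero_iff.mpr fun i _ =>
      Lagrange.nodalWeight_ne_zero Function.injective_id.injOn (Fintype.mem_piFinset.mp hy i)
  exact (mul_eq_zero.mp hsum).resolve_left hweight

end Necessity

theorem exists_lt_of_mem_support_of_lt_sum {σ R : Type*} [Fintype σ] [CommSemiring R]
    {w k : σ → ℕ} {α : ℕ} {P : MvPolynomial σ R}
    (hP : IsWeightedHomogeneous w P α) (hα : α < ∑ i, k i * w i) {m : σ →₀ ℕ}
    (hm : m ∈ P.support) : ∃ i, m i < k i := by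
  by_contra! hle
  have hweight : ∑ i, m i * w i = α := by
    rw [← hP (mem_support_iff.mp hm), Finsupp.weight_apply, Finsupp.sum_fintype _ _ (by simp)]
    simp only [smul_eq_mul]
  exact hα.not_ge (hweight ▸ sum_le_sum fun i _ => Nat.mul_le_mul_right (w i) (hle i))

theorem sum_card_sub_one_mul_le_of_surjective_evalOn {n : ℕ} {F : Type} [Field F]
    {B : Fin n → Finset F} (hB : ∀ i, (B i).Nonempty) {w : Fin n → ℕ} {α : ℕ}
    (hsurj : Function.Surjective fun P : weightedHomogeneousSubmodule F w α =>
      evalOn F (Fintype.piFinset B) P.val) :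
    ∑ i, (#(B i) - 1) * w i ≤ α := by
  classical
  by_contra! hα
  obtain ⟨y, hy⟩ := Fintype.piFinset_nonempty.mpr hB
  obtain ⟨⟨P, hP⟩, hPy⟩ := hsurj (Pi.single ⟨y, hy⟩ 1)
  have heval (z) (hz : z ∈ Fintype.piFinset B) : eval z P = if z = y then 1 else 0 :=
    (congrFun hPy ⟨z, hz⟩).trans (by simp [Pi.single_apply])
  have hzero : eval y P = 0 :=
    eval_eq_zero_of_forall_ne_eval_eq_zero
      (fun m hm => exists_lt_of_mem_support_of_lt_sum hP hα hm) hy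
      fun z hz hzy => by rw [heval z hz, if_neg hzy]
  rw [heval y hy, if_pos rfl] at hzero
  exact one_ne_zero hzero

theorem surjective_of_forall_exists_eq_single {ι R M : Type*} [Finite ι] [DecidableEq ι]
    [Semiring R] [AddCommMonoid M] [Module R M] {L : M →ₗ[R] ι → R}
    (hL : ∀ i, ∃ x, L x = Pi.single i 1) : Function.Surjective L := by
  rw [← LinearMap.range_eq_top, eq_top_iff, ← (Pi.basisFun R ι).span_eq, Submodule.span_le]
  rintro _ ⟨i, rfl⟩
  simpa only [Pi.basisFun_apply, SetLike.mem_coe, LinearMap.mem_range] using hL i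

/-- The grid `{1} × ∏ i, A i`, that is, the product of the `A i` embedded in the affine chart
`x₀ = 1`. Writing it as a grid in all `n + 1` coordinates lets the necessary condition for arbitrary
grids apply to it. -/
def affineGrid {n : ℕ} {F : Type*} [One F] (A : Fin n → Finset F) : Finset (Fin (n + 1) → F) :=
  Fintype.piFinset (Fin.cons {1} A)

theorem mem_affineGrid {n : ℕ} {F : Type*} [One F] {A : Fin n → Finset F} {x : Fin (n + 1) → F} :
    x ∈ affineGrid A ↔ x 0 = 1 ∧ ∀ i, x i.succ ∈ A i := by
  simp only [affineGrid, Fintype.mem_piFinset, Fin.forall_fin_succ, Fin.cons_zero, Fin.cons_succ,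
    mem_singleton]

section Sufficiency

variable {n : ℕ} {F : Type*} [Field F] [DecidableEq F] {A : Fin n → Finset F}
  {x y : Fin (n + 1) → F}

/-- The product over `i` of the Lagrange basis polynomials of `A i` at `y i.succ` in the variable
`X i.succ`, homogenized by powers of `X 0` for the weights `(1, w)`. On `affineGrid A` it is the
indicator function of the point `y`. -/
noncomputable def lagrangeForm (w : Fin n → ℕ) (A : Fin n → Finset F) (y : Fin (n + 1) → F) :
    MvPolynomial (Fin (n + 1)) F :=
  ∏ i, ∏ b ∈ (A i).erase (y i.succ), C (y i.succ - b)⁻¹ * (X i.succ - C b * X 0 ^ w i)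

theorem isWeightedHomogeneous_lagrangeForm (w : Fin n → ℕ) (hy : ∀ i, y i.succ ∈ A i) :
    IsWeightedHomogeneous (Fin.cons 1 w : Fin (n + 1) → ℕ) (lagrangeForm w A y)
      (∑ i, (#(A i) - 1) * w i) := by
  refine .prod _ _ _ fun i _ => ?_
  have hX : IsWeightedHomogeneous (Fin.cons 1 w : Fin (n + 1) → ℕ)
      (X i.succ : MvPolynomial (Fin (n + 1)) F) (w i) := isWeightedHomogeneous_X F _ i.succ
  have hX₀ : IsWeightedHomogeneous (Fin.cons 1 w : Fin (n + 1) → ℕ)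
      (X 0 ^ w i : MvPolynomial (Fin (n + 1)) F) (w i) := by
    simpa using (isWeightedHomogeneous_X F (Fin.cons 1 w : Fin (n + 1) → ℕ) 0).pow (w i)
  rw [← card_erase_of_mem (hy i), ← smul_eq_mul, ← sum_const]
  exact .prod _ _ _ fun b _ => (hX.sub (hX₀.C_mul b)).C_mul _

theorem eval_lagrangeForm (w : Fin n → ℕ) (A : Fin n → Finset F) (y : Fin (n + 1) → F)
    (hx : x 0 = 1) :
    eval x (lagrangeForm w A y) =
      ∏ i, (Lagrange.basis (A i) id (y i.succ)).eval (x i.succ) := by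
  simp [lagrangeForm, Lagrange.basis, Lagrange.basisDivisor, Polynomial.eval_prod, hx]

theorem eval_lagrangeForm_of_mem_affineGrid (w : Fin n → ℕ)
    (hy : y ∈ affineGrid A) (hx : x ∈ affineGrid A) :
    eval x (lagrangeForm w A y) = if x = y then 1 else 0 := by
  obtain ⟨hy₀, hy⟩ := mem_affineGrid.mp hy
  obtain ⟨hx₀, hx⟩ := mem_affineGrid.mp hx
  rw [eval_lagrangeForm w A y hx₀]
  split_ifs with hxy
  · subst hxy
    exact prod_eq_one fun i _ => Lagrange.eval_basis_self Function.injective_id.injOn (hy i)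
  · obtain ⟨i, hi⟩ : ∃ i : Fin n, x i.succ ≠ y i.succ := by
      by_contra! hsucc
      exact hxy (funext (Fin.cases (hx₀.trans hy₀.symm) hsucc))
    exact prod_eq_zero (mem_univ i) (Lagrange.eval_basis_of_ne (v := id) hi.symm (hx i))

end Sufficiency

theorem surjective_evalOn_of_sum_card_sub_one_mul_le {n : ℕ} {F : Type} [Field F]
    {A : Fin n → Finset F} {w : Fin n → ℕ} {α : ℕ} (hα : ∑ i, (#(A i) - 1) * w i ≤ α) :
    Function.Surjective fun P : weightedHomogeneousSubmodule F (Fin.cons 1 w) α =>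
      evalOn F (affineGrid A) P.val := by
  classical
  refine surjective_of_forall_exists_eq_single
    (L := (evalOn F (affineGrid A)).domRestrict
      (weightedHomogeneousSubmodule F (Fin.cons 1 w) α)) ?_
  rintro ⟨y, hy⟩
  have hhom : IsWeightedHomogeneous (Fin.cons 1 w : Fin (n + 1) → ℕ)
      (X 0 ^ (α - ∑ i, (#(A i) - 1) * w i) * lagrangeForm w A y) α := by
    have hX₀ := (isWeightedHomogeneous_X F (Fin.cons 1 w : Fin (n + 1) → ℕ) 0).pow
      (α - ∑ i, (#(A i) - 1) * w i)
    have hy_succ := (mem_affineGrid.mp hy).2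
    simpa [Nat.sub_add_cancel hα] using hX₀.mul (isWeightedHomogeneous_lagrangeForm w hy_succ)
  refine ⟨⟨_, hhom⟩, funext fun ⟨x, hx⟩ => ?_⟩
  calc eval x (X 0 ^ (α - ∑ i, (#(A i) - 1) * w i) * lagrangeForm w A y)
      = if x = y then 1 else 0 := by
        rw [map_mul, map_pow, eval_X, (mem_affineGrid.mp hx).1, one_pow, one_mul,
          eval_lagrangeForm_of_mem_affineGrid w hy hx]
    _ = _ := by simp [Pi.single_apply]

theorem stmt3_general {n : ℕ} {F : Type} [Field F] {A : Fin n → Finset F}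
    (hA : ∀ i, (A i).Nonempty) (w : Fin n → ℕ) (α : ℕ) :
    Function.Surjective
        (fun P : weightedHomogeneousSubmodule F (Fin.cons 1 w) α =>
          evalOn F (affineGrid A) P.val) ↔
      ∑ i, (#(A i) - 1) * w i ≤ α := by
  refine ⟨fun hsurj => ?_, surjective_evalOn_of_sum_card_sub_one_mul_le⟩
  have hB : ∀ i, ((Fin.cons {1} A : Fin (n + 1) → Finset F) i).Nonempty :=
    Fin.cases (singleton_nonempty 1) hA
  simpa [Fin.sum_univ_succ] using sum_card_sub_one_mul_le_of_surjective_evalOn hB hsurj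

section UnitPowers

/-- The set of `k`-th powers of units of `F`, as elements of `F` rather than of `Fˣ`, so that it can
serve as a factor of a grid. -/
def unitPowers (F : Type*) [Monoid F] [Fintype Fˣ] [DecidableEq F] (k : ℕ) : Finset F :=
  univ.image fun s : Fˣ => (s : F) ^ k

theorem unitPowers_nonempty (F : Type*) [Monoid F] [Fintype Fˣ] [DecidableEq F] (k : ℕ) :
    (unitPowers F k).Nonempty :=
  univ_nonempty.image _

theorem card_unitPowers (F : Type*) [Field F] [Fintype F] [DecidableEq F] (k : ℕ) :
    #(unitPowers F k) = (Fintype.card F - 1) / Nat.gcd (Fintype.card F - 1) k := by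
  have hcoe : (unitPowers F k : Set F) = Units.val '' (powMonoidHom k : Fˣ →* Fˣ).range := by
    ext a
    simp [unitPowers]
  rw [← Set.ncard_coe_finset, hcoe, Set.ncard_image_of_injective _ Units.val_injective,
    ← Nat.card_coe_set_eq, SetLike.coe_sort_coe, IsCyclic.card_powMonoidHom_range,
    Nat.card_eq_fintype_card, Fintype.card_units]

theorem coe_affineGrid_unitPowers {n : ℕ} (F : Type*) [Monoid F] [Fintype Fˣ]
    [DecidableEq F] (w : Fin n → ℕ) :
    (affineGrid (fun i => unitPowers F (w i)) : Set (Fin (n + 1) → F)) =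
      {y | ∃ s : Fin n → Fˣ, y = Fin.cons 1 fun i => (s i : F) ^ w i} := by
  ext y
  simp only [mem_coe, mem_affineGrid, unitPowers, mem_image, mem_univ, true_and,
    Classical.skolem, Set.mem_ofPred_eq, funext_iff, Fin.forall_fin_succ, Fin.cons_zero,
    Fin.cons_succ, exists_and_left, eq_comm]

end UnitPowers

/-- With `q` the cardinality of a finite field `𝔽`, positive integers
`w 1, …, w n`, weights `(1, w₁, …, wₙ)` on `𝔽[x₀, …, xₙ]`,
`d i = (q-1)/gcd(q-1, w i)` and `Y = {(1, s₁^{w₁}, …, sₙ^{wₙ}) : sᵢ ∈ 𝔽ˣ}`,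
the evaluation map `ev_Y : S_α → (Y → 𝔽)` is surjective iff
`α ≥ (d₁-1)w₁ + ⋯ + (dₙ-1)wₙ`. -/
theorem stmt3 (n : ℕ) (F : Type) [Field F] [Fintype F] (q : ℕ) (hq : Fintype.card F = q)
    (w : Fin n → ℕ) (hw : ∀ i, 0 < w i)
    (d : Fin n → ℕ) (hd : ∀ i, d i = (q - 1) / Nat.gcd (q - 1) (w i))
    (Y : Set (Fin (n + 1) → F))
    (hY : Y = {y | ∃ s : Fin n → Fˣ, y = Fin.cons 1 fun i => (s i : F) ^ w i})
    (α : ℕ) :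
    Function.Surjective
        (fun P : (weightedHomogeneousSubmodule F (Fin.cons 1 w) α) => evalOn F Y P.val) ↔
      (∑ i, (d i - 1) * w i) ≤ α := by
  classical
  rw [hY, ← coe_affineGrid_unitPowers, stmt3_general (fun i => unitPowers_nonempty F (w i))]
  simp only [card_unitPowers, hd, hq]
end

section
/- Let q be a prime power and let w_1, …, w_n be positive integers; use weights (1, w_1, …, w_n) on 𝔽_q[x_0,…,x_n]. For 1 ≤ i ≤ n set d_i = (q−1)/gcd(q−1, w_i), and let Y = {(1, s_1^{w_1}, …, s_n^{w_n}) : s_1,…,s_n ∈ 𝔽_q^×} ⊆ 𝔽_q^{n+1}. Then for every α ∈ ℕ, the rank over 𝔽_q of the evaluation map ev_Y : S_α → (Y → 𝔽_q) (i.e., the dimension of the code C_{α,Y}) equals the number of tuples (m_1,…,m_n) ∈ ℕ^n with m_i ≤ d_i − 1 for all i and m_1 w_1 + ⋯ + m_n w_n ≤ α. -/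
open MvPolynomial

/-!
On a product of finite subgroups `H i ≤ Fˣ`, a monomial restricts to a character, which depends only
on the residues of its exponents modulo the orders of the `H i`. Reducing the exponents does not
raise the weighted degree, and the variable `x₀`, of weight and value `1`, absorbs the difference.
So the code is spanned by the characters with reduced exponents and weighted degree at most `α`. The
`H i` are cyclic, so distinct reduced exponents give distinct characters, and these are linearly
independent by Dedekind's theorem.
-/

section Characters

theorem finrank_span_image_monoidHom {G R : Type*} [Monoid G] [CommRing R] [IsDomain R]
    (S : Set (G →* R)) :
    Module.finrank R (Submodule.span R ((fun χ : G →* R => (χ : G → R)) '' S)) = S.ncard := by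
  have independent : LinearIndependent R fun χ : S => (χ.1 : G → R) :=
    (linearIndependent_monoidHom G R).comp _ Subtype.val_injective
  rw [Set.image_eq_range, Module.finrank_eq_nat_card_basis (Module.Basis.span independent),
    Nat.card_coe_set_eq]

variable {ι M : Type*} [Fintype ι] [CommMonoid M]

/-- The character `t ↦ ∏ i, t i ^ m i` of the torus `∏ i, H i`, with values in `M`. It is the
restriction to the torus of the monomial with exponents `m`. -/
def torusCharacter (H : ι → Subgroup Mˣ) (m : ι → ℕ) : (∀ i, H i) →* M where
  toFun t := ∏ i, ((t i : Mˣ) : M) ^ m i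
  map_one' := by simp
  map_mul' s t := by simp [mul_pow, Finset.prod_mul_distrib]

variable (H : ι → Subgroup Mˣ)

theorem torusCharacter_apply (m : ι → ℕ) (t : ∀ i, H i) :
    torusCharacter H m t = ∏ i, ((t i : Mˣ) : M) ^ m i :=
  rfl

theorem torusCharacter_mulSingle [DecidableEq ι] (m : ι → ℕ) (i : ι) (s : H i) :
    torusCharacter H m (Pi.mulSingle i s) = ((s ^ m i : H i) : Mˣ) := by
  rw [torusCharacter_apply, Finset.prod_eq_single i]
  · simp
  · intro j _ hj
    simp [Pi.mulSingle_eq_of_ne hj]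
  · simp

theorem torusCharacter_mod_card (m : ι → ℕ) :
    torusCharacter H (fun i => m i % Nat.card (H i)) = torusCharacter H m := by
  ext t
  refine Finset.prod_congr rfl fun i _ => ?_
  simp only [← Units.val_pow_eq_pow_val, ← SubgroupClass.coe_pow, pow_mod_natCard]

theorem image_torusCharacter_sum_mul_le [∀ i, Finite (H i)] (w : ι → ℕ) (α : ℕ) :
    torusCharacter H '' {m | ∑ i, m i * w i ≤ α} =
      torusCharacter H '' {m | (∀ i, m i < Nat.card (H i)) ∧ ∑ i, m i * w i ≤ α} := by
  refine Set.Subset.antisymm ?_ (Set.image_mono fun m hm => hm.2)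
  rintro _ ⟨m, hm, rfl⟩
  refine ⟨fun i => m i % Nat.card (H i), ⟨fun i => Nat.mod_lt _ Nat.card_pos, ?_⟩,
    torusCharacter_mod_card H m⟩
  exact (Finset.sum_le_sum fun i _ => Nat.mul_le_mul_right _ (Nat.mod_le _ _)).trans hm

theorem torusCharacter_injOn [∀ i, IsCyclic (H i)] :
    Set.InjOn (torusCharacter H) {m | ∀ i, m i < Nat.card (H i)} := by
  classical
  intro a ha b hb hab
  ext i
  obtain ⟨g, hg⟩ := IsCyclic.exists_ofOrder_eq_natCard (α := H i)
  have pow_eq : g ^ a i = g ^ b i := by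
    have h := DFunLike.congr_fun hab (Pi.mulSingle i g)
    rw [torusCharacter_mulSingle, torusCharacter_mulSingle] at h
    exact Subtype.ext (Units.ext h)
  exact pow_injOn_Iio_orderOf (by simpa [hg] using ha i) (by simpa [hg] using hb i) pow_eq

end Characters

section Codes

variable {n : ℕ}

theorem code_eq_span_monomial (F : Type) [Field F] (w : Fin n → ℕ) (α : ℕ)
    (Y : Set (Fin n → F)) :
    code F w α Y = Submodule.span F
      ((fun a => evalOn F Y (monomial a 1)) '' {a | Finsupp.weight w a = α}) := by
  rw [code, weightedHomogeneousSubmodule_eq_finsupp_supported,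
    AddMonoidAlgebra.supported_eq_span_single, Submodule.map_span, Set.image_image]
  rfl

theorem weight_cons_one (w : Fin n → ℕ) (a : Fin (n + 1) →₀ ℕ) :
    Finsupp.weight (Fin.cons 1 w : Fin (n + 1) → ℕ) a = a 0 + ∑ i, Fin.tail a i * w i := by
  rw [Finsupp.weight_apply, Finsupp.sum_fintype _ _ (by simp), Fin.sum_univ_succ]
  simp [Fin.tail]

theorem image_tail_weight_cons_one_eq (w : Fin n → ℕ) (α : ℕ) :
    (fun a : Fin (n + 1) →₀ ℕ => Fin.tail a) ''
        {a | Finsupp.weight (Fin.cons 1 w : Fin (n + 1) → ℕ) a = α} =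
      {m : Fin n → ℕ | ∑ i, m i * w i ≤ α} := by
  ext m
  constructor
  · rintro ⟨a, ha, rfl⟩
    rw [Set.mem_ofPred_eq, weight_cons_one] at ha
    exact ha ▸ Nat.le_add_left _ _
  · intro hm
    refine ⟨Finsupp.equivFunOnFinite.symm (Fin.cons (α - ∑ i, m i * w i) m), ?_, by simp⟩
    rw [Set.mem_ofPred_eq, weight_cons_one]
    simpa using Nat.sub_add_cancel hm

/-- The point `(1, t₁, …, tₙ)` attached to a point `t` of the torus `∏ i, H i`. The evaluation set
of the code is the range of this map when `H i` is the group of `w i`-th powers. -/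
def torusPoint {R : Type*} [Monoid R] (H : Fin n → Subgroup Rˣ) (t : ∀ i, H i) :
    Fin (n + 1) → R :=
  Fin.cons 1 fun i => ((t i : Rˣ) : R)

theorem eval_torusPoint_monomial {R : Type*} [CommSemiring R] (H : Fin n → Subgroup Rˣ)
    (t : ∀ i, H i) (a : Fin (n + 1) →₀ ℕ) :
    eval (torusPoint H t) (monomial a 1) = torusCharacter H (Fin.tail a) t := by
  rw [eval_monomial, Finsupp.prod_fintype _ _ (by simp), Fin.prod_univ_succ]
  simp [torusPoint, torusCharacter_apply, Fin.tail]

variable {F : Type} [Field F] (H : Fin n → Subgroup Fˣ) (w : Fin n → ℕ) (α : ℕ)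

theorem map_funLeft_code_range_torusPoint :
    (code F (Fin.cons 1 w) α (Set.range (torusPoint H))).map
        (LinearMap.funLeft F F (Set.rangeFactorization (torusPoint H))) =
      Submodule.span F ((fun χ : (∀ i, H i) →* F => (χ : (∀ i, H i) → F)) ''
        (torusCharacter H '' {m | ∑ i, m i * w i ≤ α})) := by
  have pullback_monomial (a : Fin (n + 1) →₀ ℕ) :
      LinearMap.funLeft F F (Set.rangeFactorization (torusPoint H))
        (evalOn F (Set.range (torusPoint H)) (monomial a 1)) = torusCharacter H (Fin.tail a) := by
    ext t
    rw [LinearMap.funLeft_apply]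
    exact eval_torusPoint_monomial H t a
  rw [code_eq_span_monomial, Submodule.map_span, ← image_tail_weight_cons_one_eq]
  simp only [Set.image_image, pullback_monomial]

theorem stmt5_general [∀ i, Finite (H i)] :
    Module.finrank F (code F (Fin.cons 1 w) α (Set.range (torusPoint H))) =
      Nat.card {m : Fin n → ℕ // (∀ i, m i < Nat.card (H i)) ∧ ∑ i, m i * w i ≤ α} := by
  have pullback_injective := LinearMap.funLeft_injective_of_surjective F F _
    (Set.rangeFactorization_surjective (f := torusPoint H))
  rw [(Submodule.equivMapOfInjective _ pullback_injective _).finrank_eq,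
    map_funLeft_code_range_torusPoint, image_torusCharacter_sum_mul_le,
    finrank_span_image_monoidHom,
    ((torusCharacter_injOn H).mono fun m hm => hm.1).ncard_image]
  exact (Nat.card_coe_set_eq _).symm

end Codes

section FiniteField

variable {F : Type*} [Field F]

theorem range_torusPoint_range_powMonoidHom {n : ℕ} (w : Fin n → ℕ) :
    Set.range (torusPoint fun i => (powMonoidHom (w i) : Fˣ →* Fˣ).range) =
      {y | ∃ s : Fin n → Fˣ, y = Fin.cons 1 fun i => (s i : F) ^ w i} := by
  ext y
  constructor
  · rintro ⟨t, rfl⟩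
    choose s hs using fun i => (t i).2
    refine ⟨s, ?_⟩
    simp [torusPoint, ← hs]
  · rintro ⟨s, rfl⟩
    exact ⟨fun i => ⟨s i ^ w i, s i, rfl⟩, by simp [torusPoint]⟩

theorem lt_card_range_powMonoidHom_units_iff [Fintype F] (w k : ℕ) :
    k < Nat.card (powMonoidHom w : Fˣ →* Fˣ).range ↔
      k ≤ (Fintype.card F - 1) / Nat.gcd (Fintype.card F - 1) w - 1 := by
  have card_range : Nat.card (powMonoidHom w : Fˣ →* Fˣ).range =
      (Fintype.card F - 1) / Nat.gcd (Fintype.card F - 1) w := by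
    rw [IsCyclic.card_powMonoidHom_range, Nat.card_units, Nat.card_eq_fintype_card]
  rw [← card_range]
  exact Nat.lt_iff_le_pred Nat.card_pos

end FiniteField

/-- With `q` the cardinality of a finite field `𝔽`, positive integers
`w 1, …, w n`, weights `(1, w₁, …, wₙ)` on `𝔽[x₀, …, xₙ]`,
`d i = (q-1)/gcd(q-1, w i)` and `Y = {(1, s₁^{w₁}, …, sₙ^{wₙ}) : sᵢ ∈ 𝔽ˣ}`,
the dimension of the code `C_{α,Y}` equals the number of tuples
`(m₁, …, mₙ) ∈ ℕⁿ` with `mᵢ ≤ dᵢ - 1` and `m₁w₁ + ⋯ + mₙwₙ ≤ α`. -/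
theorem stmt5 (n : ℕ) (F : Type) [Field F] [Fintype F] (q : ℕ) (hq : Fintype.card F = q)
    (w : Fin n → ℕ) (hw : ∀ i, 0 < w i)
    (d : Fin n → ℕ) (hd : ∀ i, d i = (q - 1) / Nat.gcd (q - 1) (w i))
    (Y : Set (Fin (n + 1) → F))
    (hY : Y = {y | ∃ s : Fin n → Fˣ, y = Fin.cons 1 fun i => (s i : F) ^ w i})
    (α : ℕ) :
    Module.finrank F (code F (Fin.cons 1 w) α Y) =
      Nat.card {m : Fin n → ℕ // (∀ i, m i ≤ d i - 1) ∧ (∑ i, m i * w i) ≤ α} := by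
  subst hq hY
  rw [← range_torusPoint_range_powMonoidHom, stmt5_general]
  simp only [lt_card_range_powMonoidHom_units_iff, hd]
end

section
/- Let q be a prime power, a a positive integer, and use weights (1, 1, a) on 𝔽_q[x_0, x_1, x_2]. Set d_2 = (q−1)/gcd(q−1, a) and Y = {(1, t_1, t_2^a) : t_1, t_2 ∈ 𝔽_q^×} ⊆ 𝔽_q^3. If q−2 < α < (q−2) + (d_2 − 1)a, then the dimension over 𝔽_q of the code C_{α,Y} equals (q−1)(k+1) + (μ_2 − k)(α + 1) − a·(μ_2(μ_2+1) − k(k+1))/2, where k = ⌊(α − (q−2))/a⌋ and μ_2 = min(⌊α/a⌋, d_2 − 1). -/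
open MvPolynomial

/-!
On a point set parametrized by a monoid `G` through characters `φ i : G →* F`, the monomial with
exponents `m` evaluates to the character `∏ i, φ i ^ m i`. Distinct characters are linearly
independent (Dedekind), so the dimension of the code is the number of distinct characters arising
from the monomials of degree `α`. For the points `(1, t₁, t₂ ^ a)` these are the
`t₁ ^ i * t₂ ^ (a * j)` with `i + a * j ≤ α`; the characters `t₁` and `t₂ ^ a` have orders `q - 1`
and `d₂`, and reducing `i` and `j` modulo these orders stays in the region `i + a * j ≤ α`. The
dimension is therefore the number of lattice points of that region in the box
`[0, q - 1) × [0, d₂)`. The row at height `j` holds `q - 1` points for `j ≤ k`, `α + 1 - a * j`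
points for `k < j ≤ μ₂`, and none above.
-/

section Characters

variable {F : Type} [Field F] {G : Type*} [Monoid G]

theorem finrank_span_monoidHom (s : Set (G →* F)) :
    Module.finrank F (Submodule.span F ((⇑) '' s : Set (G → F))) = s.ncard := by
  have hindep : LinearIndepOn F id ((⇑) '' s : Set (G → F)) :=
    (linearIndependent_monoidHom G F).linearIndepOn_id.mono (Set.image_subset_range _ _)
  rw [Module.finrank, rank_span_set hindep, ← Set.ncard_image_of_injective s DFunLike.coe_injective]
  rfl

variable {n : ℕ} (w : Fin n → ℕ) (α : ℕ) (φ : Fin n → G →* F)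

theorem map_funLeft_code_range :
    (code F w α (Set.range fun t i => φ i t)).map
        (LinearMap.funLeft F F (Set.rangeFactorization fun t i => φ i t)) =
      Submodule.span F ((⇑) ''
        ((fun m : Fin n →₀ ℕ => ∏ i, φ i ^ m i) '' {m | Finsupp.weight w m = α})) := by
  rw [code, weightedHomogeneousSubmodule_eq_finsupp_supported,
    AddMonoidAlgebra.supported_eq_span_single, Submodule.map_span, Submodule.map_span,
    Set.image_image, Set.image_image, Set.image_image]
  congr 1
  refine Set.image_congr fun m _ => funext fun t => ?_
  simp [evalOn, LinearMap.funLeft_apply, single_eq_monomial, eval_monomial,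
    Finsupp.prod_fintype, MonoidHom.finsetProd_apply]

theorem finrank_code_range :
    Module.finrank F (code F w α (Set.range fun t i => φ i t)) =
      ((fun m : Fin n →₀ ℕ => ∏ i, φ i ^ m i) '' {m | Finsupp.weight w m = α}).ncard := by
  have hinj := LinearMap.funLeft_injective_of_surjective F F _
    (Set.rangeFactorization_surjective (f := fun t i => φ i t))
  rw [(Submodule.equivMapOfInjective _ hinj _).finrank_eq, map_funLeft_code_range,
    finrank_span_monoidHom]

end Characters

section PowersInMonoids

variable {M N P : Type*} [Monoid M] [Monoid N] [CommMonoid P]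

theorem ncard_image_pow_prodMk_pow {x : M} {y : N} (hx : IsOfFinOrder x) (hy : IsOfFinOrder y)
    {S : Set (ℕ × ℕ)} (hS : IsLowerSet S) :
    ((fun p : ℕ × ℕ => (x ^ p.1, y ^ p.2)) '' S).ncard =
      (S ∩ Set.Iio (orderOf x) ×ˢ Set.Iio (orderOf y)).ncard := by
  have himage : (fun p : ℕ × ℕ => (x ^ p.1, y ^ p.2)) '' S =
      (fun p : ℕ × ℕ => (x ^ p.1, y ^ p.2)) ''
        (S ∩ Set.Iio (orderOf x) ×ˢ Set.Iio (orderOf y)) := by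
    refine Set.Subset.antisymm ?_ (Set.image_mono Set.inter_subset_left)
    rintro _ ⟨⟨i, j⟩, hij, rfl⟩
    refine ⟨(i % orderOf x, j % orderOf y), ⟨hS ⟨Nat.mod_le i _, Nat.mod_le j _⟩ hij,
      Nat.mod_lt i hx.orderOf_pos, Nat.mod_lt j hy.orderOf_pos⟩, ?_⟩
    simp only [pow_mod_orderOf]
  rw [himage, Set.InjOn.ncard_image]
  rintro ⟨i, j⟩ ⟨-, hi, hj⟩ ⟨i', j'⟩ ⟨-, hi', hj'⟩ h
  obtain ⟨hxpow, hypow⟩ := Prod.mk.inj h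
  exact Prod.ext (pow_injOn_Iio_orderOf hi hi' hxpow) (pow_injOn_Iio_orderOf hj hj' hypow)

theorem monoidHom_coprod_injective :
    Function.Injective fun f : (M →* P) × (N →* P) => f.1.coprod f.2 := by
  intro f g h
  have hfst := congrArg (·.comp (MonoidHom.inl M N)) h
  have hsnd := congrArg (·.comp (MonoidHom.inr M N)) h
  simp only [MonoidHom.coprod_comp_inl] at hfst
  simp only [MonoidHom.coprod_comp_inr] at hsnd
  exact Prod.ext hfst hsnd

end PowersInMonoids

theorem orderOf_unitsCoeHom (M : Type*) [CommMonoid M] :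
    orderOf (Units.coeHom M) = Monoid.exponent Mˣ := by
  refine Nat.dvd_right_iff_eq.mp fun n => ?_
  rw [orderOf_dvd_iff_pow_eq_one, Monoid.exponent_dvd_iff_forall_pow_eq_one]
  simp [MonoidHom.ext_iff, Units.ext_iff]

theorem isLowerSet_add_mul_le (a α : ℕ) : IsLowerSet {p : ℕ × ℕ | p.1 + a * p.2 ≤ α} :=
  fun _ _ hle hp => (add_le_add hle.1 (Nat.mul_le_mul_left a hle.2)).trans hp

theorem image_setOf_weight_eq (a α : ℕ) :
    (fun m : Fin 3 →₀ ℕ => (m 1, m 2)) '' {m | Finsupp.weight ![1, 1, a] m = α} =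
      {p | p.1 + a * p.2 ≤ α} := by
  have hweight (m : Fin 3 →₀ ℕ) : Finsupp.weight ![1, 1, a] m = m 0 + m 1 + a * m 2 := by
    simp [Finsupp.weight_apply, Finsupp.sum_fintype, Fin.sum_univ_three, mul_comm]
  ext ⟨i, j⟩
  simp only [Set.mem_image, Set.mem_ofPred_eq, hweight, Prod.mk.injEq]
  constructor
  · rintro ⟨m, hm, rfl, rfl⟩
    omega
  · intro hij
    refine ⟨Finsupp.equivFunOnFinite.symm ![α - (i + a * j), i, j], ?_, rfl, rfl⟩
    change α - (i + a * j) + i + a * j = α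
    omega

theorem ncard_add_mul_le_inter_box (a α m d : ℕ) :
    ({p : ℕ × ℕ | p.1 + a * p.2 ≤ α} ∩ Set.Iio m ×ˢ Set.Iio d).ncard =
      ∑ j ∈ Finset.range d, min m (α + 1 - a * j) := by
  have hrow (j : ℕ) :
      {i ∈ Finset.range m | i + a * j ≤ α} = Finset.range (min m (α + 1 - a * j)) := by
    ext i
    simp only [Finset.mem_filter, Finset.mem_range]
    omega
  have hfilter : {p : ℕ × ℕ | p.1 + a * p.2 ≤ α} ∩ Set.Iio m ×ˢ Set.Iio d =
      ↑{p ∈ Finset.range m ×ˢ Finset.range d | p.1 + a * p.2 ≤ α} := by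
    ext p
    simp [and_comm]
  rw [hfilter, Set.ncard_coe_finset, Finset.card_filter, Finset.sum_product_right]
  simp only [← Finset.card_filter, hrow, Finset.card_range]

section Torus

variable (F : Type) [Field F] (a α : ℕ)

/-- The coordinates of the point `(1, t₁, t₂ ^ a)` as characters of the torus of parameters
`(t₁, t₂)`. -/
def torusCoords : Fin 3 → Fˣ × Fˣ →* F :=
  ![1, (Units.coeHom F).comp (MonoidHom.fst Fˣ Fˣ),
    (Units.coeHom F ^ a).comp (MonoidHom.snd Fˣ Fˣ)]

theorem range_torusCoords :
    (Set.range fun t i => torusCoords F a i t) =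
      {y | ∃ t₁ t₂ : Fˣ, y = ![1, (t₁ : F), (t₂ : F) ^ a]} := by
  ext y
  simp [torusCoords, funext_iff, Fin.forall_fin_succ, eq_comm]

theorem prod_torusCoords_pow (m : Fin 3 → ℕ) :
    ∏ i, torusCoords F a i ^ m i =
      (Units.coeHom F ^ m 1).coprod ((Units.coeHom F ^ a) ^ m 2) := by
  ext t
  simp [torusCoords, Fin.prod_univ_three]

theorem ncard_image_prod_torusCoords_pow [Finite F] :
    ((fun m : Fin 3 →₀ ℕ => ∏ i, torusCoords F a i ^ m i) ''
        {m | Finsupp.weight ![1, 1, a] m = α}).ncard =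
      ({p : ℕ × ℕ | p.1 + a * p.2 ≤ α} ∩ Set.Iio (Nat.card F - 1) ×ˢ
        Set.Iio ((Nat.card F - 1) / (Nat.card F - 1).gcd a)).ncard := by
  have horder : orderOf (Units.coeHom F) = Nat.card F - 1 := by
    rw [orderOf_unitsCoeHom, IsCyclic.exponent_eq_card, Nat.card_units]
  have hfin : IsOfFinOrder (Units.coeHom F) :=
    orderOf_pos_iff.mp (by rw [horder]; exact Nat.sub_pos_of_lt Finite.one_lt_card)
  have himage : (fun m : Fin 3 →₀ ℕ => ∏ i, torusCoords F a i ^ m i) ''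
        {m | Finsupp.weight ![1, 1, a] m = α} =
      (fun f : (Fˣ →* F) × (Fˣ →* F) => f.1.coprod f.2) ''
        ((fun p : ℕ × ℕ => (Units.coeHom F ^ p.1, (Units.coeHom F ^ a) ^ p.2)) ''
          {p | p.1 + a * p.2 ≤ α}) := by
    simp only [prod_torusCoords_pow, ← image_setOf_weight_eq, Set.image_image]
  rw [himage, Set.ncard_image_of_injective _ monoidHom_coprod_injective,
    ncard_image_pow_prodMk_pow hfin hfin.pow (isLowerSet_add_mul_le a α), hfin.orderOf_pow, horder]

theorem finrank_code_torus_s8 [Finite F] :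
    Module.finrank F
        (code F ![1, 1, a] α {y | ∃ t₁ t₂ : Fˣ, y = ![1, (t₁ : F), (t₂ : F) ^ a]}) =
      ∑ j ∈ Finset.range ((Nat.card F - 1) / (Nat.card F - 1).gcd a),
        min (Nat.card F - 1) (α + 1 - a * j) := by
  rw [← range_torusCoords, finrank_code_range, ncard_image_prod_torusCoords_pow,
    ncard_add_mul_le_inter_box]

end Torus

theorem sum_range_min_eq_add_sum_Ioc {f : ℕ → ℕ} {m d k l : ℕ} (hkl : k ≤ l) (hld : l < d)
    (hlow : ∀ j ≤ k, m ≤ f j) (hmid : ∀ j, k < j → f j ≤ m) (hhigh : ∀ j, l < j → j < d → f j = 0) :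
    ∑ j ∈ Finset.range d, min m (f j) = m * (k + 1) + ∑ j ∈ Finset.Ioc k l, f j := by
  have hsum_low : ∑ j ∈ Finset.range (k + 1), min m (f j) = m * (k + 1) := by
    rw [Finset.sum_congr rfl fun j hj =>
      min_eq_left (hlow j (Nat.lt_succ_iff.mp (Finset.mem_range.mp hj)))]
    simp [mul_comm]
  have hsum_mid : ∑ j ∈ Finset.Ico (k + 1) (l + 1), min m (f j) = ∑ j ∈ Finset.Ioc k l, f j :=
    Finset.sum_congr (by ext j; simp)
      fun j hj => min_eq_right (hmid j (Finset.mem_Ioc.mp hj).1)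
  have hsum_high : ∑ j ∈ Finset.Ico (l + 1) d, min m (f j) = 0 :=
    Finset.sum_eq_zero fun j hj => by
      rw [hhigh j (Finset.mem_Ico.mp hj).1 (Finset.mem_Ico.mp hj).2, Nat.min_zero]
  rw [← Finset.sum_range_add_sum_Ico _ hld, hsum_high, add_zero,
    ← Finset.sum_range_add_sum_Ico _ (Nat.succ_le_succ hkl), hsum_low, hsum_mid]

theorem two_mul_sum_Ioc_natCast {R : Type*} [CommRing R] {k l : ℕ} (hkl : k ≤ l) :
    2 * ∑ j ∈ Finset.Ioc k l, (j : R) = l * (l + 1) - k * (k + 1) := by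
  induction l, hkl using Nat.le_induction with
  | base => simp
  | succ l hkl ih =>
    rw [Finset.sum_Ioc_succ_top hkl, mul_add, ih]
    push_cast
    ring

theorem sum_Ioc_sub_mul (c a : ℤ) {k l : ℕ} (hkl : k ≤ l) :
    ∑ j ∈ Finset.Ioc k l, (c - a * j) =
      ((l : ℤ) - k) * c - a * ((l : ℤ) * (l + 1) - k * (k + 1)) / 2 := by
  have hdiv : a * ((l : ℤ) * (l + 1) - k * (k + 1)) / 2 = a * ∑ j ∈ Finset.Ioc k l, (j : ℤ) := by
    rw [← two_mul_sum_Ioc_natCast hkl, mul_left_comm, Int.mul_ediv_cancel_left _ two_ne_zero]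
  rw [hdiv, Finset.mul_sum, Finset.sum_sub_distrib, Finset.sum_const, Nat.card_Ioc, nsmul_eq_mul,
    Nat.cast_sub hkl]

theorem sum_range_min_sub_mul {m d a α k l : ℕ} (ha : 0 < a) (hm : 0 < m) (hmα : m ≤ α + 1)
    (hk : k = (α + 1 - m) / a) (hkd : k < d) (hl : l = min (α / a) (d - 1)) :
    ((∑ j ∈ Finset.range d, min m (α + 1 - a * j) : ℕ) : ℤ) =
      m * (k + 1) + ((l : ℤ) - k) * (α + 1) - a * ((l : ℤ) * (l + 1) - k * (k + 1)) / 2 := by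
  have hle_k (j : ℕ) : j ≤ k ↔ a * j ≤ α + 1 - m := by
    rw [hk, Nat.le_div_iff_mul_le ha, mul_comm]
  have hle_l (j : ℕ) : j ≤ l ↔ a * j ≤ α ∧ j ≤ d - 1 := by
    rw [hl, le_min_iff, Nat.le_div_iff_mul_le ha, mul_comm]
  have hkl : k ≤ l := (hle_l k).2 ⟨((hle_k k).1 le_rfl).trans (by omega), Nat.le_sub_one_of_lt hkd⟩
  have hld : l < d := by have := ((hle_l l).1 le_rfl).2; omega
  have hlow (j : ℕ) (hj : j ≤ k) : m ≤ α + 1 - a * j := by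
    have := (hle_k j).1 hj
    omega
  have hmid (j : ℕ) (hj : k < j) : α + 1 - a * j ≤ m := by
    have := (hle_k j).not.1 hj.not_ge
    omega
  have hhigh (j : ℕ) (hlj : l < j) (hjd : j < d) : α + 1 - a * j = 0 := by
    have := (hle_l j).not.1 hlj.not_ge
    omega
  have hcast (j : ℕ) (hj : j ∈ Finset.Ioc k l) : ((α + 1 - a * j : ℕ) : ℤ) = α + 1 - a * j := by
    have := ((hle_l j).1 (Finset.mem_Ioc.mp hj).2).1
    push_cast [Nat.cast_sub (this.trans α.le_succ)]
    ring
  rw [sum_range_min_eq_add_sum_Ioc hkl hld hlow hmid hhigh, Nat.cast_add, Nat.cast_sum,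
    Finset.sum_congr rfl hcast, sum_Ioc_sub_mul _ _ hkl]
  push_cast
  ring

/-- With `q` the cardinality of a finite field `𝔽`, a positive
integer `a`, weights `(1, 1, a)` on `𝔽[x₀, x₁, x₂]`, `d₂ = (q-1)/gcd(q-1, a)` and
`Y = {(1, t₁, t₂^a) : t₁, t₂ ∈ 𝔽ˣ}`: if `q-2 < α < (q-2) + (d₂-1)a` then
`dim C_{α,Y} = (q-1)(k+1) + (μ₂-k)(α+1) - a(μ₂(μ₂+1) - k(k+1))/2` where
`k = ⌊(α-(q-2))/a⌋` and `μ₂ = min(⌊α/a⌋, d₂-1)`. -/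
theorem stmt8 (F : Type) [Field F] [Fintype F] (q : ℕ) (hq : Fintype.card F = q)
    (a : ℕ) (ha : 0 < a)
    (d2 : ℕ) (hd2 : d2 = (q - 1) / Nat.gcd (q - 1) a)
    (Y : Set (Fin 3 → F))
    (hY : Y = {y | ∃ t1 t2 : Fˣ, y = ![1, (t1 : F), (t2 : F) ^ a]})
    (α : ℕ) (hα1 : q - 2 < α) (hα2 : α < (q - 2) + (d2 - 1) * a)
    (k : ℕ) (hk : k = (α - (q - 2)) / a)
    (μ2 : ℕ) (hμ2 : μ2 = min (α / a) (d2 - 1)) :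
    (Module.finrank F (code F ![1, 1, a] α Y) : ℤ) =
      ((q : ℤ) - 1) * (k + 1) + ((μ2 : ℤ) - k) * (α + 1) -
        a * ((μ2 : ℤ) * (μ2 + 1) - k * (k + 1)) / 2 := by
  have hq1 : 1 < q := hq ▸ Fintype.one_lt_card
  have hk' : k = (α + 1 - (q - 1)) / a := by rw [hk]; congr 1; omega
  have hkd : k < d2 := by
    have : k < d2 - 1 := hk ▸ Nat.div_lt_of_lt_mul (by rw [mul_comm]; omega)
    omega
  rw [hY, finrank_code_torus_s8, Nat.card_eq_fintype_card, hq, ← hd2,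
    sum_range_min_sub_mul ha (Nat.sub_pos_of_lt hq1) (by omega) hk' hkd hμ2,
    Nat.cast_sub hq1.le, Nat.cast_one]
end

section
/- Let q be a prime power, a a positive integer, and use weights (1, 1, a) on 𝔽_q[x_0, x_1, x_2]. Set d_2 = (q−1)/gcd(q−1, a) and Y = {(1, t_1, t_2^a) : t_1, t_2 ∈ 𝔽_q^×} ⊆ 𝔽_q^3. If q−2 ≤ α < (q−2) + (d_2 − 1)a, then the minimum distance of the code C_{α,Y} equals d_2 − k, where k = ⌊(α − (q−2))/a⌋. -/
open MvPolynomial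

/-!
On a finite grid `A × B` every monomial agrees with its remainder modulo the vanishing polynomials
of `A` and `B`, and passing to remainders does not raise degrees. So a codeword is given on the
grid by a bivariate polynomial `G` whose monomials `x ^ i * y ^ j` satisfy `i < #A`, `j < #B` and
`i + a * j ≤ α`. Counting non-zeros fibrewise, first of the leading coefficient of `G` in `y` and
then of its specializations, a nonzero `G` does not vanish in at least `(#A - i) * (#B - j)`
points, where `x ^ i * y ^ j` is its leading monomial, and the degree constraints make this at
least `#B - k`. The bound is attained by a product of linear forms which vanishes on the grid
outside `{t₀} × B` and at `k` of the points of that column.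
-/

section CountNonzeros

open Polynomial
open scoped Finset Polynomial.Bivariate

variable {R : Type*} [CommRing R] [IsDomain R] [DecidableEq R]

theorem card_sub_natDegree_le_card_eval_ne_zero {p : R[X]} (hp : p ≠ 0) (S : Finset R) :
    #S - p.natDegree ≤ #{x ∈ S | p.eval x ≠ 0} := by
  have card_zeros : #{x ∈ S | p.eval x = 0} ≤ p.natDegree :=
    card_le_degree_of_subset_roots fun x hx ↦
      (mem_roots hp).2 (Finset.mem_filter.1 hx).2
  have card_split := S.card_filter_add_card_filter_not (fun x ↦ p.eval x = 0)
  lia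

theorem mul_le_card_evalEval_ne_zero {G : R[X][Y]} (hG : G ≠ 0) (A B : Finset R) :
    (#A - G.leadingCoeff.natDegree) * (#B - G.natDegree) ≤
      #{x ∈ A ×ˢ B | G.evalEval x.1 x.2 ≠ 0} := by
  have column_le : ∀ t ∈ A.filter (G.leadingCoeff.eval · ≠ 0),
      #B - G.natDegree ≤ #{s ∈ B | G.evalEval t s ≠ 0} := by
    intro t ht
    have map_ne_zero : G.map (evalRingHom t) ≠ 0 := fun h ↦
      (Finset.mem_filter.1 ht).2 (by simpa using congr_arg (Polynomial.coeff · G.natDegree) h)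
    simpa only [map_evalRingHom_eval] using
      (Nat.sub_le_sub_left natDegree_map_le _).trans
        (card_sub_natDegree_le_card_eval_ne_zero map_ne_zero B)
  calc (#A - G.leadingCoeff.natDegree) * (#B - G.natDegree)
      ≤ #{t ∈ A | G.leadingCoeff.eval t ≠ 0} * (#B - G.natDegree) :=
        Nat.mul_le_mul_right _
          (card_sub_natDegree_le_card_eval_ne_zero (leadingCoeff_ne_zero.2 hG) A)
    _ ≤ ∑ t ∈ A with G.leadingCoeff.eval t ≠ 0, #{s ∈ B | G.evalEval t s ≠ 0} :=
        Finset.card_nsmul_le_sum _ _ _ column_le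
    _ ≤ ∑ t ∈ A, #{s ∈ B | G.evalEval t s ≠ 0} :=
        Finset.sum_le_sum_of_subset (Finset.filter_subset _ _)
    _ = #{x ∈ A ×ˢ B | G.evalEval x.1 x.2 ≠ 0} := by
        simp only [Finset.card_filter, Finset.sum_product]

end CountNonzeros

section GridReduction

open Polynomial Lagrange
open scoped Finset Polynomial.Bivariate

variable {R : Type*} [CommRing R]

theorem eval_modByMonic_nodal {S : Finset R} {x : R} (hx : x ∈ S) (p : R[X]) :
    (p %ₘ nodal S id).eval x = p.eval x :=
  eval₂_modByMonic_eq_self_of_root (eval_nodal_at_node (v := id) hx)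

theorem lt_card_of_coeff_modByMonic_nodal_ne_zero [Nontrivial R] {S : Finset R} {p : R[X]} {i : ℕ}
    (h : (p %ₘ nodal S id).coeff i ≠ 0) : i < #S := by
  rw [← Nat.cast_lt (α := WithBot ℕ)]
  calc (i : WithBot ℕ) ≤ (p %ₘ nodal S id).degree := le_degree_of_ne_zero h
    _ < (nodal S id).degree := degree_modByMonic_lt p nodal_monic
    _ = #S := degree_nodal

theorem le_of_coeff_X_pow_modByMonic_ne_zero {q : R[X]} {n i : ℕ}
    (h : (Polynomial.X ^ n %ₘ q).coeff i ≠ 0) : i ≤ n :=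
  (le_natDegree_of_ne_zero h).trans <| natDegree_modByMonic_le_left.trans (natDegree_X_pow_le n)

/-- The polynomial function `(t, s) ↦ P(1, t, s)` on the grid `A × B`, as a bivariate polynomial
of degree less than `#A` in the inner and less than `#B` in the outer variable: each power of a
variable is replaced by its remainder modulo the polynomial vanishing on `A`, respectively `B`. -/
noncomputable def gridReduction (A B : Finset R) (P : MvPolynomial (Fin 3) R) : R[X][Y] :=
  ∑ d ∈ P.support,
    Polynomial.C (Polynomial.C (P.coeff d) * (Polynomial.X ^ d 1 %ₘ nodal A id)) *
      (Polynomial.X ^ d 2 %ₘ nodal B id).map Polynomial.C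

theorem evalEval_gridReduction {A B : Finset R} {t s : R} (ht : t ∈ A) (hs : s ∈ B)
    (P : MvPolynomial (Fin 3) R) :
    (gridReduction A B P).evalEval t s = MvPolynomial.eval ![1, t, s] P := by
  simp only [gridReduction, MvPolynomial.eval_eq', evalEval_finsetSum, evalEval_mul, evalEval_C,
    evalEval_map_C, Polynomial.eval_mul, Polynomial.eval_C, eval_modByMonic_nodal ht,
    eval_modByMonic_nodal hs, Polynomial.eval_pow, Polynomial.eval_X, Fin.prod_univ_three,
    Matrix.cons_val, one_pow, one_mul, mul_assoc]

theorem exists_mem_support_of_coeff_gridReduction_ne_zero [Nontrivial R] {A B : Finset R}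
    {P : MvPolynomial (Fin 3) R} {i j : ℕ} (h : ((gridReduction A B P).coeff j).coeff i ≠ 0) :
    i < #A ∧ j < #B ∧ ∃ d ∈ P.support, i ≤ d 1 ∧ j ≤ d 2 := by
  simp only [gridReduction, finsetSum_coeff, Polynomial.coeff_C_mul, Polynomial.coeff_map,
    coeff_mul_C] at h
  obtain ⟨d, hd, hne⟩ := Finset.exists_ne_zero_of_sum_ne_zero h
  have hA : (Polynomial.X ^ d 1 %ₘ nodal A id).coeff i ≠ 0 :=
    right_ne_zero_of_mul (left_ne_zero_of_mul hne)
  have hB : (Polynomial.X ^ d 2 %ₘ nodal B id).coeff j ≠ 0 := right_ne_zero_of_mul hne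
  exact ⟨lt_card_of_coeff_modByMonic_nodal_ne_zero hA, lt_card_of_coeff_modByMonic_nodal_ne_zero hB,
    d, hd, le_of_coeff_X_pow_modByMonic_ne_zero hA, le_of_coeff_X_pow_modByMonic_ne_zero hB⟩

theorem add_le_of_coeff_gridReduction_ne_zero [Nontrivial R] {A B : Finset R}
    {P : MvPolynomial (Fin 3) R} {w : Fin 3 → ℕ} {α : ℕ} (hP : P.IsWeightedHomogeneous w α)
    {i j : ℕ} (h : ((gridReduction A B P).coeff j).coeff i ≠ 0) : i * w 1 + j * w 2 ≤ α := by
  obtain ⟨-, -, d, hd, hi, hj⟩ := exists_mem_support_of_coeff_gridReduction_ne_zero h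
  calc i * w 1 + j * w 2 ≤ d 0 * w 0 + d 1 * w 1 + d 2 * w 2 := by
        gcongr
        exact (Nat.mul_le_mul_right _ hi).trans (Nat.le_add_left _ _)
    _ = Finsupp.weight w d := by
        simp [Finsupp.weight_apply, Finsupp.sum_fintype, Fin.sum_univ_three]
    _ = α := hP (MvPolynomial.mem_support_iff.1 hd)

end GridReduction

section HomogenizedNodal

variable {R : Type*} [CommRing R]

/-- The homogenization by `x₀`, with respect to weights `w` such that `w 0 = 1`, of the polynomial
in `xᵢ` whose roots are the elements of `S`. -/
noncomputable def homogenizedNodal {n : ℕ} (w : Fin (n + 1) → ℕ) (i : Fin (n + 1))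
    (S : Finset R) : MvPolynomial (Fin (n + 1)) R :=
  ∏ u ∈ S, (X i - C u * X 0 ^ w i)

theorem isWeightedHomogeneous_homogenizedNodal {n : ℕ} {w : Fin (n + 1) → ℕ} (hw : w 0 = 1)
    (i : Fin (n + 1)) (S : Finset R) :
    (homogenizedNodal w i S).IsWeightedHomogeneous w (S.card * w i) := by
  have factor (u : R) : (X i - C u * X 0 ^ w i).IsWeightedHomogeneous w (w i) := by
    have X_zero_pow := (isWeightedHomogeneous_X R w 0).pow (w i)
    rw [hw, smul_eq_mul, mul_one] at X_zero_pow
    exact (isWeightedHomogeneous_X R w i).sub (X_zero_pow.C_mul u)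
  simpa [homogenizedNodal] using IsWeightedHomogeneous.prod S _ (fun _ ↦ w i) fun u _ ↦ factor u

theorem eval_homogenizedNodal_ne_zero_iff [IsDomain R] {n : ℕ} {w : Fin (n + 1) → ℕ}
    {i : Fin (n + 1)} {S : Finset R} {x : Fin (n + 1) → R} (hx : x 0 = 1) :
    eval x (homogenizedNodal w i S) ≠ 0 ↔ x i ∉ S := by
  simp [homogenizedNodal, hx, Finset.prod_eq_zero_iff, sub_eq_zero]

end HomogenizedNodal

section GridCode

open scoped Finset

/-- The points `(1, t, s)` with `(t, s) ∈ A × B`: a grid in the affine chart `x₀ = 1` of a weighted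
projective plane whose first weight is `1`. -/
def gridPoints {R : Type*} [One R] (A B : Finset R) : Set (Fin 3 → R) :=
  (fun x : R × R ↦ ![1, x.1, x.2]) '' (A ×ˢ B : Finset (R × R))

theorem setOf_units_pow_eq_gridPoints {M : Type*} [Monoid M] [Fintype Mˣ] [DecidableEq M]
    (a : ℕ) :
    {y : Fin 3 → M | ∃ t1 t2 : Mˣ, y = ![1, (t1 : M), (t2 : M) ^ a]} =
      gridPoints (Finset.univ.image Units.val) (Finset.univ.image fun t : Mˣ ↦ (t : M) ^ a) := by
  ext y
  constructor
  · rintro ⟨t, s, rfl⟩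
    exact ⟨(t, (s : M) ^ a), by simp, rfl⟩
  · rintro ⟨_, hts, rfl⟩
    obtain ⟨ht, hs⟩ := Finset.mem_product.1 hts
    obtain ⟨t, -, ht⟩ := Finset.mem_image.1 ht
    obtain ⟨s, -, hs⟩ := Finset.mem_image.1 hs
    exact ⟨t, s, by rw [ht, hs]⟩

theorem ncard_evalOn_gridPoints_ne_zero {R : Type} [CommSemiring R] [DecidableEq R]
    {A B : Finset R} (P : MvPolynomial (Fin 3) R) :
    {p | evalOn R (gridPoints A B) P p ≠ 0}.ncard =
      #{x ∈ A ×ˢ B | eval ![1, x.1, x.2] P ≠ 0} := by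
  have chart_injective : Function.Injective fun x : R × R ↦ ![1, x.1, x.2] := by
    rintro ⟨t, s⟩ ⟨t', s'⟩ h
    simpa using h
  rw [← Set.ncard_image_of_injective _ Subtype.val_injective, ← Set.ncard_coe_finset,
    ← Set.ncard_image_of_injective _ chart_injective]
  congr 1
  ext y
  constructor
  · rintro ⟨⟨_, x, hx, rfl⟩, hne, rfl⟩
    exact ⟨x, Finset.mem_filter.2 ⟨hx, hne⟩, rfl⟩
  · rintro ⟨x, hx, rfl⟩
    obtain ⟨hx, hne⟩ := Finset.mem_filter.1 hx
    exact ⟨⟨_, x, hx, rfl⟩, hne, rfl⟩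

theorem gridReduction_ne_zero_of_evalOn_ne_zero {R : Type} [CommRing R] {A B : Finset R}
    {P : MvPolynomial (Fin 3) R} (h : evalOn R (gridPoints A B) P ≠ 0) :
    gridReduction A B P ≠ 0 := by
  contrapose h
  ext ⟨_, ⟨t, s⟩, hts, rfl⟩
  obtain ⟨ht, hs⟩ := Finset.mem_product.1 hts
  exact (evalEval_gridReduction ht hs P).symm.trans (by simp [h])

theorem sub_div_le_mul_of_add_mul_le {a m n α i j : ℕ} (ha : 0 < a) (hi : i < m) (hj : j < n)
    (h : i + j * a ≤ α) : n - (α - (m - 1)) / a ≤ (m - i) * (n - j) := by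
  obtain ⟨e, rfl⟩ : ∃ e, m = i + e + 1 := Nat.exists_eq_add_of_lt hi
  obtain ⟨v, rfl⟩ : ∃ v, n = j + v + 1 := Nat.exists_eq_add_of_lt hj
  have he : e ≤ e * a := Nat.le_mul_of_pos_right e ha
  have sub_le_div : j - e ≤ (α - (i + e + 1 - 1)) / a := by
    rw [Nat.le_div_iff_mul_le ha, Nat.sub_mul]
    lia
  calc j + v + 1 - (α - (i + e + 1 - 1)) / a ≤ e + v + 1 := by lia
    _ ≤ (e + 1) * (v + 1) := by nlinarith
    _ = (i + e + 1 - i) * (j + v + 1 - j) := by congr 1 <;> lia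

variable {F : Type} [Field F] {A B : Finset F}

theorem le_ncard_ne_zero_of_mem_code_gridPoints {a α : ℕ} (ha : 0 < a) {c : gridPoints A B → F}
    (hc : c ∈ code F ![1, 1, a] α (gridPoints A B)) (hc0 : c ≠ 0) :
    #B - (α - (#A - 1)) / a ≤ {p | c p ≠ 0}.ncard := by
  classical
  obtain ⟨P, hP, rfl⟩ := hc
  set G := gridReduction A B P with hG
  have hG0 : G ≠ 0 := gridReduction_ne_zero_of_evalOn_ne_zero hc0
  have leading_ne_zero : (G.coeff G.natDegree).coeff G.leadingCoeff.natDegree ≠ 0 := by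
    simpa using hG0
  obtain ⟨hi, hj, -⟩ := exists_mem_support_of_coeff_gridReduction_ne_zero leading_ne_zero
  have leading_weight_le := add_le_of_coeff_gridReduction_ne_zero hP leading_ne_zero
  rw [ncard_evalOn_gridPoints_ne_zero]
  calc #B - (α - (#A - 1)) / a
      ≤ (#A - G.leadingCoeff.natDegree) * (#B - G.natDegree) :=
        sub_div_le_mul_of_add_mul_le ha hi hj (by simpa using leading_weight_le)
    _ ≤ #{x ∈ A ×ˢ B | G.evalEval x.1 x.2 ≠ 0} := mul_le_card_evalEval_ne_zero hG0 A B
    _ = #{x ∈ A ×ˢ B | eval ![1, x.1, x.2] P ≠ 0} := by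
        congr 1
        refine Finset.filter_congr fun x hx ↦ ?_
        obtain ⟨ht, hs⟩ := Finset.mem_product.1 hx
        rw [hG, evalEval_gridReduction ht hs]

theorem exists_mem_code_gridPoints_ncard_ne_zero_eq (hA : A.Nonempty) {a α k : ℕ} (hk : k ≤ #B)
    (hα : #A - 1 + k * a ≤ α) :
    ∃ c ∈ code F ![1, 1, a] α (gridPoints A B), {p | c p ≠ 0}.ncard = #B - k := by
  classical
  obtain ⟨t₀, ht₀⟩ := hA
  obtain ⟨K, hKB, rfl⟩ := Finset.exists_subset_card_eq hk
  let w : Fin 3 → ℕ := ![1, 1, a]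
  let P := homogenizedNodal w 1 (A.erase t₀) * homogenizedNodal w 2 K *
    X 0 ^ (α - (#A - 1 + #K * a))
  have hP : P.IsWeightedHomogeneous w α := by
    have product_homogeneous :=
      ((isWeightedHomogeneous_homogenizedNodal rfl 1 (A.erase t₀)).mul
        (isWeightedHomogeneous_homogenizedNodal (w := w) rfl 2 K)).mul
        ((isWeightedHomogeneous_X F w 0).pow (α - (#A - 1 + #K * a)))
    convert product_homogeneous using 1
    simp only [w, Matrix.cons_val, Finset.card_erase_of_mem ht₀, smul_eq_mul, mul_one]
    lia
  have nonzeros_eq : {x ∈ A ×ˢ B | eval ![1, x.1, x.2] P ≠ 0} = {t₀} ×ˢ (B \ K) := by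
    ext ⟨t, s⟩
    simp only [P, map_mul, map_pow, eval_X, Matrix.cons_val, one_pow, mul_one, mul_ne_zero_iff,
      eval_homogenizedNodal_ne_zero_iff (x := ![1, t, s]) rfl, Finset.mem_filter,
      Finset.mem_product, Finset.mem_singleton, Finset.mem_sdiff, Finset.mem_erase]
    grind
  refine ⟨evalOn F _ P, ⟨P, hP, rfl⟩, ?_⟩
  rw [ncard_evalOn_gridPoints_ne_zero, nonzeros_eq, Finset.card_product, Finset.card_singleton,
    one_mul, Finset.card_sdiff_of_subset hKB]

theorem stmt10_general (hA : A.Nonempty) {a α k : ℕ} (hα1 : #A - 1 ≤ α)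
    (hα2 : α < #A - 1 + #B * a) (hk : k = (α - (#A - 1)) / a) :
    (∀ c ∈ code F ![1, 1, a] α (gridPoints A B), c ≠ 0 → #B - k ≤ {p | c p ≠ 0}.ncard) ∧
      ∃ c ∈ code F ![1, 1, a] α (gridPoints A B), c ≠ 0 ∧ {p | c p ≠ 0}.ncard = #B - k := by
  subst hk
  have ha : 0 < a := Nat.pos_of_ne_zero fun h ↦ by
    rw [h, mul_zero] at hα2
    lia
  have hkB : (α - (#A - 1)) / a < #B := by
    rw [Nat.div_lt_iff_lt_mul ha]
    lia
  have hkα := Nat.div_mul_le_self (α - (#A - 1)) a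
  refine ⟨fun c ↦ le_ncard_ne_zero_of_mem_code_gridPoints ha, ?_⟩
  obtain ⟨c, hc, hcard⟩ :=
    exists_mem_code_gridPoints_ncard_ne_zero_eq hA (a := a) (α := α) hkB.le (by lia)
  refine ⟨c, hc, ?_, hcard⟩
  rintro rfl
  simp only [Pi.zero_apply, ne_eq, not_true_eq_false, Set.ofPred_false, Set.ncard_empty] at hcard
  lia

end GridCode

section FiniteField

open scoped Finset

variable {F : Type*} [Field F] [Fintype F] [DecidableEq F]

theorem card_image_units_val :
    #(Finset.univ.image (Units.val : Fˣ → F)) = Fintype.card F - 1 := by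
  rw [Finset.card_image_of_injective _ Units.val_injective, Finset.card_univ, Fintype.card_units]

theorem card_image_units_pow (a : ℕ) :
    #(Finset.univ.image fun t : Fˣ ↦ (t : F) ^ a) =
      (Fintype.card F - 1) / (Fintype.card F - 1).gcd a := by
  have image_eq : ((Finset.univ.image fun t : Fˣ ↦ (t : F) ^ a : Finset F) : Set F) =
      Units.val '' ((powMonoidHom a : Fˣ →* Fˣ).range : Set Fˣ) := by
    ext
    simp
  rw [← Set.ncard_coe_finset, image_eq, Set.ncard_image_of_injective _ Units.val_injective,
    ← Nat.card_coe_set_eq, SetLike.coe_sort_coe, IsCyclic.card_powMonoidHom_range,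
    Nat.card_eq_fintype_card, Fintype.card_units]

end FiniteField

/-- With `q` the cardinality of a finite field `𝔽`, a positive
integer `a`, weights `(1, 1, a)` on `𝔽[x₀, x₁, x₂]`, `d₂ = (q-1)/gcd(q-1, a)` and
`Y = {(1, t₁, t₂^a) : t₁, t₂ ∈ 𝔽ˣ}`: if `q-2 ≤ α < (q-2) + (d₂-1)a` then the
minimum distance of `C_{α,Y}` equals `d₂ - k` where `k = ⌊(α-(q-2))/a⌋`: every
nonzero codeword has at least `d₂ - k` nonzero coordinates, and some nonzero
codeword attains this value. -/
theorem stmt10 (F : Type) [Field F] [Fintype F] (q : ℕ) (hq : Fintype.card F = q)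
    (a : ℕ) (ha : 0 < a)
    (d2 : ℕ) (hd2 : d2 = (q - 1) / Nat.gcd (q - 1) a)
    (Y : Set (Fin 3 → F))
    (hY : Y = {y | ∃ t1 t2 : Fˣ, y = ![1, (t1 : F), (t2 : F) ^ a]})
    (α : ℕ) (hα1 : q - 2 ≤ α) (hα2 : α < (q - 2) + (d2 - 1) * a)
    (k : ℕ) (hk : k = (α - (q - 2)) / a) :
    (∀ c ∈ code F ![1, 1, a] α Y, c ≠ 0 →
        d2 - k ≤ {p : Y | c p ≠ 0}.ncard) ∧
      ∃ c ∈ code F ![1, 1, a] α Y, c ≠ 0 ∧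
        {p : Y | c p ≠ 0}.ncard = d2 - k := by
  classical
  have hA := card_image_units_val (F := F)
  have hB := card_image_units_pow (F := F) a
  rw [hq] at hA
  rw [hq, ← hd2] at hB
  subst hY
  rw [setOf_units_pow_eq_gridPoints, ← hB]
  refine stmt10_general (Finset.univ_nonempty.image _) ?_ ?_ ?_ <;> rw [hA, Nat.sub_sub]
  · exact hα1
  · rw [hB]
    exact hα2.trans_le (by gcongr; exact Nat.sub_le d2 1)
  · exact hk
end

section
/- Let q be a prime power, a a positive integer, and use weights (1, 1, a) on 𝔽_q[x_0, x_1, x_2]. Set d_2 = (q−1)/gcd(q−1, a) and Y = {(1, t_1, t_2^a) : t_1, t_2 ∈ 𝔽_q^×} ⊆ 𝔽_q^3. If α ≥ (q−2) + (d_2 − 1)a, then the minimum distance of the code C_{α,Y} equals 1; that is, there is a codeword c ∈ C_{α,Y} that is nonzero at exactly one point of Y. -/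
open MvPolynomial

/-! On `x₀ = 1` the factor `xᵢ - s x₀ ^ wᵢ`, weighted homogeneous of degree `wᵢ`, vanishes exactly
where `xᵢ = s`. Multiplying these factors over all coordinates `i ≠ 0` and all values `s ≠ pᵢ` that
the `i`-th coordinate takes on `Y` isolates the point `p`; the power of `x₀` needed to reach degree
`α` equals `1` on `Y`. The values `t ^ wᵢ` form a subgroup of the cyclic group `Fˣ`, of order
`(q - 1) / gcd (q - 1, wᵢ)`. -/

section GridVanishing

variable {R : Type*} [CommRing R] {n : ℕ} (w : Fin n → ℕ) (T : Fin n → Finset R)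

/-- The weighted homogenization, by means of `x₀`, of the polynomial `∏ᵢ ∏ₛ (xᵢ - s)`, `s ∈ Tᵢ`,
whose zeros are the points with some coordinate in the corresponding `Tᵢ`. The variable indexed by
`i : Fin n` is `X i.succ`. -/
noncomputable def gridVanishing : MvPolynomial (Fin (n + 1)) R :=
  ∏ i, ∏ s ∈ T i, (X i.succ - C s * X 0 ^ w i)

theorem isWeightedHomogeneous_gridVanishing :
    IsWeightedHomogeneous (Matrix.vecCons 1 w) (gridVanishing w T) (∑ i, (T i).card * w i) := by
  have factor (i : Fin n) (s : R) :
      IsWeightedHomogeneous (Matrix.vecCons 1 w) (X i.succ - C s * X 0 ^ w i) (w i) := by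
    have hX := isWeightedHomogeneous_X R (Matrix.vecCons 1 w) i.succ
    have hX₀ := ((isWeightedHomogeneous_X R (Matrix.vecCons 1 w) 0).pow (w i)).C_mul s
    rw [Matrix.cons_val_succ] at hX
    rw [Matrix.cons_val_zero, smul_eq_mul, mul_one] at hX₀
    exact hX.sub hX₀
  refine IsWeightedHomogeneous.prod _ _ _ fun i _ ↦ ?_
  simpa only [Finset.sum_const, smul_eq_mul] using
    IsWeightedHomogeneous.prod (T i) _ _ fun s _ ↦ factor i s

theorem eval_gridVanishing {x : Fin (n + 1) → R} (hx : x 0 = 1) :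
    eval x (gridVanishing w T) = ∏ i, ∏ s ∈ T i, (x i.succ - s) := by
  simp [gridVanishing, hx]

theorem eval_gridVanishing_ne_zero_iff [IsDomain R] {x : Fin (n + 1) → R} (hx : x 0 = 1) :
    eval x (gridVanishing w T) ≠ 0 ↔ ∀ i, x i.succ ∉ T i := by
  simp only [eval_gridVanishing w T hx, Finset.prod_ne_zero_iff, Finset.mem_univ, forall_const,
    sub_ne_zero]
  exact forall_congr' fun i ↦ ⟨fun h hi ↦ h _ hi rfl, fun h s hs hxs ↦ h (hxs ▸ hs)⟩

end GridVanishing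

theorem evalOn_apply {F : Type} [CommSemiring F] {n : ℕ} {Y : Set (Fin n → F)}
    (P : MvPolynomial (Fin n) F) (y : Y) : evalOn F Y P y = eval y.val P :=
  rfl

theorem exists_mem_code_support_eq_singleton {F : Type} [Field F] {n : ℕ} {w : Fin n → ℕ}
    {S : Fin n → Set F} (hS : ∀ i, (S i).Finite) {Y : Set (Fin (n + 1) → F)}
    (hY₀ : ∀ y ∈ Y, y 0 = 1) (hYS : ∀ y ∈ Y, ∀ i, y i.succ ∈ S i) {α : ℕ}
    (hα : ∑ i, ((S i).ncard - 1) * w i ≤ α) (p : Y) :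
    ∃ c ∈ code F (Matrix.vecCons 1 w) α Y, Function.support c = {p} := by
  let T (i : Fin n) : Finset F := ((hS i).sdiff (t := {p.val i.succ})).toFinset
  have mem_T {i : Fin n} {s : F} : s ∈ T i ↔ s ∈ S i ∧ s ≠ p.val i.succ := by simp [T]
  have card_T (i : Fin n) : (T i).card = (S i).ncard - 1 := by
    rw [← Set.ncard_eq_toFinset_card _ (hS i).sdiff, Set.ncard_sdiff_singleton_of_mem (hYS p p.2 i)]
  let m := α - ∑ i, ((S i).ncard - 1) * w i
  have homogeneous :
      IsWeightedHomogeneous (Matrix.vecCons 1 w) (X 0 ^ m * gridVanishing w T) α := by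
    have h := ((isWeightedHomogeneous_X F (Matrix.vecCons 1 w) 0).pow m).mul
      (isWeightedHomogeneous_gridVanishing w T)
    simpa only [Matrix.cons_val_zero, smul_eq_mul, mul_one, card_T, m, Nat.sub_add_cancel hα]
      using h
  refine ⟨_, Submodule.mem_map_of_mem homogeneous, Set.ext fun y ↦ ?_⟩
  have hy₀ : y.val 0 = 1 := hY₀ y y.2
  calc y ∈ Function.support (evalOn F Y (X 0 ^ m * gridVanishing w T))
      ↔ eval y.val (gridVanishing w T) ≠ 0 := by simp [evalOn_apply, hy₀]
    _ ↔ ∀ i : Fin n, y.val i.succ = p.val i.succ := by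
        simp [eval_gridVanishing_ne_zero_iff w T hy₀, mem_T, hYS y y.2]
    _ ↔ y ∈ ({p} : Set Y) := by
        simp [Subtype.ext_iff, _root_.funext_iff, Fin.forall_fin_succ, hy₀, hY₀ p p.2]

theorem ncard_range_units_pow (F : Type*) [Field F] [Finite F] (k : ℕ) :
    (Set.range fun t : Fˣ ↦ (t : F) ^ k).ncard =
      (Nat.card F - 1) / (Nat.card F - 1).gcd k := by
  have range_eq : (Set.range fun t : Fˣ ↦ (t : F) ^ k) =
      Units.val '' ((powMonoidHom k : Fˣ →* Fˣ).range : Set Fˣ) := by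
    rw [MonoidHom.coe_range, ← Set.range_comp]
    rfl
  rw [range_eq, Set.ncard_image_of_injective _ Units.val_injective, ← Nat.card_units F]
  exact IsCyclic.card_powMonoidHom_range Fˣ k

/-- The points `(1, t₁ ^ w₁, …, tₙ ^ wₙ)` with all `tᵢ ∈ Fˣ`, the evaluation set of the toric code
on the weighted projective space `ℙ(1, w₁, …, wₙ)`. -/
def weightedTorus (F : Type*) [Monoid F] {n : ℕ} (w : Fin n → ℕ) : Set (Fin (n + 1) → F) :=
  Set.range fun t : Fin n → Fˣ ↦ Matrix.vecCons 1 fun i ↦ (t i : F) ^ w i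

theorem weightedTorus_nonempty (F : Type*) [Monoid F] {n : ℕ} (w : Fin n → ℕ) :
    (weightedTorus F w).Nonempty :=
  Set.range_nonempty _

theorem weightedTorus_one_cons (F : Type*) [Monoid F] (a : ℕ) :
    weightedTorus F ![1, a] = {y | ∃ t₁ t₂ : Fˣ, y = ![1, (t₁ : F), (t₂ : F) ^ a]} := by
  ext y
  simp only [weightedTorus, Set.mem_range, Fin.exists_fin_succ_pi, Fin.exists_fin_zero_pi]
  simp [eq_comm, _root_.funext_iff, Fin.forall_fin_succ]

theorem stmt11_general {F : Type} [Field F] [Finite F] {n : ℕ} (w : Fin n → ℕ) {α : ℕ}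
    (hα : ∑ i, ((Nat.card F - 1) / (Nat.card F - 1).gcd (w i) - 1) * w i ≤ α)
    (p : weightedTorus F w) :
    ∃ c ∈ code F (Matrix.vecCons 1 w) α (weightedTorus F w), Function.support c = {p} := by
  refine exists_mem_code_support_eq_singleton
    (S := fun i ↦ Set.range fun t : Fˣ ↦ (t : F) ^ w i) (fun _ ↦ Set.toFinite _) ?_ ?_ ?_ p
  · rintro _ ⟨t, rfl⟩
    rfl
  · rintro _ ⟨t, rfl⟩ i
    exact ⟨t i, rfl⟩
  · simpa only [ncard_range_units_pow] using hα

/-- With `q` the cardinality of a finite field `𝔽`, a positive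
integer `a`, weights `(1, 1, a)` on `𝔽[x₀, x₁, x₂]`, `d₂ = (q-1)/gcd(q-1, a)` and
`Y = {(1, t₁, t₂^a) : t₁, t₂ ∈ 𝔽ˣ}`: if `α ≥ (q-2) + (d₂-1)a` then the minimum
distance of `C_{α,Y}` equals `1`, i.e. some codeword is nonzero at exactly one
point of `Y`. -/
theorem stmt11 (F : Type) [Field F] [Fintype F] (q : ℕ) (hq : Fintype.card F = q)
    (a : ℕ) (ha : 0 < a)
    (d2 : ℕ) (hd2 : d2 = (q - 1) / Nat.gcd (q - 1) a)
    (Y : Set (Fin 3 → F))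
    (hY : Y = {y | ∃ t1 t2 : Fˣ, y = ![1, (t1 : F), (t2 : F) ^ a]})
    (α : ℕ) (hα : (q - 2) + (d2 - 1) * a ≤ α) :
    ∃ c ∈ code F ![1, 1, a] α Y, {p : Y | c p ≠ 0}.ncard = 1 := by
  subst hq hd2
  rw [← weightedTorus_one_cons] at hY
  subst hY
  obtain ⟨c, hc, hsupp⟩ := stmt11_general ![1, a] (α := α)
    (by simpa [Fin.sum_univ_two, Nat.sub_sub] using hα) (weightedTorus_nonempty F _).to_subtype.some
  exact ⟨c, hc, Set.ncard_eq_one.2 ⟨_, hsupp⟩⟩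
end
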